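/- arXiv:1810.09344 — 5 statements merged into one kernel-verified Lean document; each statement's English description precedes it below -/
import Mathlib

section
/- Let V be a real Hilbert space, K a compact subset of V, and let (u^k)_{k≥0} be a weak greedy sequence in K with parameter γ ∈ (0,1]. If for some constants C0 > 0 and s > 0 the Kolmogorov widths satisfy d_n(K) ≤ C0·(max{1,n})^{-s} for all n ≥ 0, then the greedy errors satisfy σ_n(K) ≤ 2^{4s+1}·C0·γ^{-2}·(max{1,n})^{-s} for all n ≥ 0. -/
/-- The Kolmogorov `n`-width of a set `K` in a real inner product space:
the infimum over all subspaces `E` of dimension at most `n` of the worst-case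
distance `‖u - P_E u‖ = infDist u E` over `u ∈ K`. -/
noncomputable def kolWidth {V : Type*} [NormedAddCommGroup V] [InnerProductSpace ℝ V]
    (K : Set V) (n : ℕ) : ℝ :=
  ⨅ E : {E : Submodule ℝ V // Module.rank ℝ E ≤ (n : Cardinal)},
    ⨆ u ∈ K, Metric.infDist u (E.1 : Set V)

/-- The greedy error `σ_n(K) = sup_{x ∈ K} ‖x - P_{V_n} x‖` where
`V_n = span{u^0, …, u^{n-1}}`. -/
noncomputable def greedyErr {V : Type*} [NormedAddCommGroup V] [InnerProductSpace ℝ V]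
    (u : ℕ → V) (K : Set V) (n : ℕ) : ℝ :=
  ⨆ x ∈ K, Metric.infDist x (Submodule.span ℝ (u '' Set.Iio n) : Set V)

/-- `u` is a weak greedy sequence for `K` with parameter `γ`:
`‖u^n - P_{V_n} u^n‖ ≥ γ · σ_n(K)` for all `n`. -/
def IsWeakGreedy {V : Type*} [NormedAddCommGroup V] [InnerProductSpace ℝ V]
    (u : ℕ → V) (K : Set V) (γ : ℝ) : Prop :=
  ∀ n : ℕ, γ * greedyErr u K n ≤
    Metric.infDist (u n) (Submodule.span ℝ (u '' Set.Iio n) : Set V)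

lemma wg_infDist_eq {V : Type*} [NormedAddCommGroup V] [InnerProductSpace ℝ V]
    (U : Submodule ℝ V) [U.HasOrthogonalProjection] (x : V) :
    Metric.infDist x (U : Set V) = ‖x - U.starProjection x‖ := by
  rw [Submodule.starProjection_minimal, Metric.infDist_eq_iInf]
  simp only [dist_eq_norm]
  rfl

lemma wg_det_bound (m : ℕ) (W : Submodule ℝ (EuclideanSpace ℝ (Fin (2 * m))))
    (hW : Module.finrank ℝ W ≤ m) (w : Fin (2 * m) → EuclideanSpace ℝ (Fin (2 * m)))
    (σ δ : ℝ) (hδ : 0 < δ) (hδσ : δ ≤ σ) (h1 : ∀ i, ‖w i‖ ≤ σ)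
    (h2 : ∀ i, Metric.infDist (w i) (W : Set (EuclideanSpace ℝ (Fin (2 * m)))) ≤ δ) :
    |(EuclideanSpace.basisFun (Fin (2 * m)) ℝ).toBasis.det w| ≤ (2 * σ * δ) ^ m := by
  have hσ : 0 < σ := hδ.trans_le hδσ
  have : Fact (Module.finrank ℝ (EuclideanSpace ℝ (Fin (2 * m))) = 2 * m) := ⟨by simp⟩
  set b := EuclideanSpace.basisFun (Fin (2 * m)) ℝ with hb
  have had : ∀ v, |b.toBasis.det v| ≤ ∏ i, ‖v i‖ := by
    intro v
    have := (b.toBasis.orientation).abs_volumeForm_apply_le v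
    rwa [Orientation.volumeForm_robust _ b rfl] at this
  let e := W.prodEquivOfIsCompl Wᗮ W.isCompl_orthogonal
  let S : EuclideanSpace ℝ (Fin (2 * m)) →ₗ[ℝ] EuclideanSpace ℝ (Fin (2 * m)) :=
    σ⁻¹ • W.starProjection.toLinearMap + δ⁻¹ • Wᗮ.starProjection.toLinearMap
  have hS : S = (e : (W × Wᗮ) →ₗ[ℝ] _) ∘ₗ
      (LinearMap.prodMap (σ⁻¹ • LinearMap.id) (δ⁻¹ • LinearMap.id)) ∘ₗ
      (e.symm : _ →ₗ[ℝ] (W × Wᗮ)) := by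
    ext1 x
    obtain ⟨⟨p, q⟩, rfl⟩ := e.surjective x
    have hp : W.starProjection ((p : EuclideanSpace ℝ (Fin (2 * m))) + q) = p := by
      rw [map_add, Submodule.starProjection_eq_self_iff.2 p.2,
        (Submodule.starProjection_apply_eq_zero_iff W).2 q.2, add_zero]
    have hq : Wᗮ.starProjection ((p : EuclideanSpace ℝ (Fin (2 * m))) + q) = q := by
      rw [map_add, Submodule.starProjection_eq_self_iff.2 q.2,
        (Submodule.starProjection_apply_eq_zero_iff Wᗮ).2
          (W.le_orthogonal_orthogonal p.2), zero_add]
    simp [S, e, hp, hq]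
  have hdet : LinearMap.det S = σ⁻¹ ^ Module.finrank ℝ W * δ⁻¹ ^ Module.finrank ℝ Wᗮ := by
    rw [hS, LinearMap.det_conj, LinearMap.det_prodMap, LinearMap.det_smul, LinearMap.det_smul]
    simp
  have hfr : Module.finrank ℝ W + Module.finrank ℝ Wᗮ = 2 * m := by
    rw [W.finrank_add_finrank_orthogonal]; simp
  have hSw : ∀ i, ‖S (w i)‖ ≤ √2 := by
    intro i
    apply Real.le_sqrt_of_sq_le
    have hP1 : ‖W.starProjection (w i)‖ ≤ σ :=
      (Submodule.norm_starProjection_apply_le W (w i)).trans (h1 i)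
    have hP2 : ‖Wᗮ.starProjection (w i)‖ ≤ δ := by
      have := h2 i
      rw [wg_infDist_eq] at this
      rwa [Submodule.starProjection_orthogonal_val]
    have horth : inner ℝ (σ⁻¹ • W.starProjection (w i)) (δ⁻¹ • Wᗮ.starProjection (w i)) = 0 := by
      rw [inner_smul_left, inner_smul_right,
        Submodule.inner_right_of_mem_orthogonal (Submodule.starProjection_apply_mem W _)
          (Submodule.starProjection_apply_mem Wᗮ _)]
      simp
    have hexp : ‖S (w i)‖ ^ 2 = (σ⁻¹ * ‖W.starProjection (w i)‖) ^ 2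
        + (δ⁻¹ * ‖Wᗮ.starProjection (w i)‖) ^ 2 := by
      have := norm_add_sq_eq_norm_sq_add_norm_sq_of_inner_eq_zero _ _ horth
      rw [norm_smul, norm_smul, Real.norm_of_nonneg (by positivity),
        Real.norm_of_nonneg (by positivity)] at this
      simp only [S, LinearMap.add_apply, LinearMap.smul_apply, ContinuousLinearMap.coe_coe]
      rw [sq, sq, sq]; exact this
    have q1 : σ⁻¹ * ‖W.starProjection (w i)‖ ≤ 1 := by
      rw [inv_mul_le_iff₀ hσ]; simpa using hP1
    have q2 : δ⁻¹ * ‖Wᗮ.starProjection (w i)‖ ≤ 1 := by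
      rw [inv_mul_le_iff₀ hδ]; simpa using hP2
    have q3 := pow_le_one₀ (n := 2) (by positivity) q1
    have q4 := pow_le_one₀ (n := 2) (by positivity) q2
    rw [hexp]; linarith
  have hmain := had (S ∘ w)
  rw [Module.Basis.det_comp, abs_mul, hdet] at hmain
  have hpr : ∏ i, ‖(S ∘ w) i‖ ≤ 2 ^ m := by
    calc ∏ i, ‖(S ∘ w) i‖ ≤ ∏ i : Fin (2 * m), √2 :=
          Finset.prod_le_prod (fun i _ => norm_nonneg _) (fun i _ => hSw i)
      _ = 2 ^ m := by simp [pow_mul]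
  set r := Module.finrank ℝ W
  set t := Module.finrank ℝ Wᗮ
  rw [abs_of_pos (by positivity)] at hmain
  have h3 : |b.toBasis.det w| ≤ σ ^ r * δ ^ t * 2 ^ m := by
    have h4 := hmain.trans hpr
    calc |b.toBasis.det w| = σ ^ r * δ ^ t * (σ⁻¹ ^ r * δ⁻¹ ^ t * |b.toBasis.det w|) := by
          rw [inv_pow, inv_pow]; field_simp
      _ ≤ _ := by gcongr
  refine h3.trans ?_
  obtain ⟨k, hk⟩ := Nat.exists_eq_add_of_le hW
  have ht : t = m + k := by omega
  calc σ ^ r * δ ^ t * 2 ^ m = σ ^ r * δ ^ k * δ ^ m * 2 ^ m := by rw [ht]; ring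
    _ ≤ σ ^ r * σ ^ k * δ ^ m * 2 ^ m := by gcongr
    _ = (2 * σ * δ) ^ m := by rw [← pow_add, ← hk, mul_pow, mul_pow]; ring

lemma wg_bdd {V : Type*} [NormedAddCommGroup V] [InnerProductSpace ℝ V]
    {K : Set V} (hK : IsCompact K) (E : Submodule ℝ V) {x : V} (hx : x ∈ K) :
    Metric.infDist x (E : Set V) ≤ ⨆ y ∈ K, Metric.infDist y (E : Set V) := by
  obtain ⟨R, hR⟩ := hK.isBounded.exists_norm_le
  have hle : ∀ y, Metric.infDist y (E : Set V) ≤ ‖y‖ := fun y => by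
    simpa using Metric.infDist_le_dist_of_mem (x := y) (show (0 : V) ∈ (E : Set V) from E.zero_mem)
  have hR0 : 0 ≤ R := (norm_nonneg x).trans (hR x hx)
  have hb : BddAbove (Set.range fun y => ⨆ (_ : y ∈ K), Metric.infDist y (E : Set V)) := by
    refine ⟨R, ?_⟩
    rintro _ ⟨y, rfl⟩
    exact Real.iSup_le (fun h => (hle y).trans (hR y h)) hR0
  refine le_trans ?_ (le_ciSup hb x)
  simp [hx]

lemma wg_le {V : Type*} [NormedAddCommGroup V] [InnerProductSpace ℝ V]
    {K : Set V} (E : Submodule ℝ V) {c : ℝ} (hc : 0 ≤ c)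
    (h : ∀ x ∈ K, Metric.infDist x (E : Set V) ≤ c) :
    ⨆ y ∈ K, Metric.infDist y (E : Set V) ≤ c :=
  Real.iSup_le (fun y => Real.iSup_le (h y) hc) hc

lemma wg_nonneg {V : Type*} [NormedAddCommGroup V] [InnerProductSpace ℝ V]
    (u : ℕ → V) (K : Set V) (n : ℕ) : 0 ≤ greedyErr u K n :=
  Real.iSup_nonneg fun _ => Real.iSup_nonneg fun _ => Metric.infDist_nonneg

lemma wg_anti {V : Type*} [NormedAddCommGroup V] [InnerProductSpace ℝ V]
    (u : ℕ → V) {K : Set V} (hK : IsCompact K) : Antitone (greedyErr u K) := by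
  intro a b hab
  refine wg_le _ (wg_nonneg u K a) fun x hx => ?_
  refine le_trans ?_ (wg_bdd hK _ hx)
  refine Metric.infDist_le_infDist_of_subset ?_ ⟨0, Submodule.zero_mem _⟩
  exact Submodule.span_mono (Set.image_mono (Set.Iio_subset_Iio hab))

/-- Key step. -/
lemma wg_key {V : Type*} [NormedAddCommGroup V] [InnerProductSpace ℝ V]
    {K : Set V} (hK : IsCompact K) (u : ℕ → V) (hu : ∀ n, u n ∈ K)
    {γ : ℝ} (hγ : γ ∈ Set.Ioc (0 : ℝ) 1) (hwg : IsWeakGreedy u K γ)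
    (N m : ℕ) (hm : 0 < m) (δ : ℝ) (hδ : 0 < δ) (E : Submodule ℝ V)
    (hE : Module.rank ℝ E ≤ (m : Cardinal))
    (hEd : ∀ x ∈ K, Metric.infDist x (E : Set V) ≤ δ) :
    (γ * greedyErr u K (N + 2 * m)) ^ 2 ≤ 2 * greedyErr u K N * δ := by
  obtain ⟨hγ0, hγ1⟩ := hγ
  set σ := greedyErr u K with hσ
  have hσ0 : ∀ n, 0 ≤ σ n := wg_nonneg u K
  have hanti : Antitone σ := wg_anti u hK
  have hτN : γ * σ (N + 2 * m) ≤ σ N :=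
    (mul_le_of_le_one_left (hσ0 _) hγ1).trans (hanti (by omega))
  have hτ0 : 0 ≤ γ * σ (N + 2 * m) := mul_nonneg hγ0.le (hσ0 _)
  rcases lt_or_ge (σ N) δ with hlt | hδσ
  · have : (γ * σ (N + 2 * m)) ^ 2 ≤ σ N ^ 2 := by gcongr
    nlinarith [hσ0 N]
  rcases (hσ0 (N + 2 * m)).eq_or_lt with h0 | hpos
  · rw [← h0]; simp; have := hσ0 N; positivity
  set U : ℕ → Submodule ℝ V := fun n => Submodule.span ℝ (u '' Set.Iio n) with hU
  have hUfin : ∀ n, FiniteDimensional ℝ (U n) := fun n =>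
    FiniteDimensional.span_of_finite ℝ ((Set.finite_Iio n).image u)
  set a : ℕ → ℝ := fun n => Metric.infDist (u n) (U n : Set V) with ha
  have haσ : ∀ n, γ * σ n ≤ a n := hwg
  have hapos : ∀ i : Fin (2 * m), 0 < a (N + i) := fun i =>
    (mul_pos hγ0 (hpos.trans_le (hanti (by omega)))).trans_le (haσ _)
  have hUmono : Monotone U := fun i j hij =>
    Submodule.span_mono (Set.image_mono (Set.Iio_subset_Iio hij))
  have humem : ∀ i j, i < j → u i ∈ U j := fun i j hij =>
    Submodule.subset_span ⟨i, hij, rfl⟩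
  set g : ℕ → V := fun n => u n - (U n).starProjection (u n) with hg
  have hga : ∀ n, ‖g n‖ = a n := fun n => (wg_infDist_eq (U n) (u n)).symm
  have hgorth : ∀ n, ∀ x ∈ U n, inner ℝ (g n) x = 0 := fun n x hx =>
    Submodule.starProjection_inner_eq_zero (u n) x hx
  have hgmem : ∀ i j, i < j → g i ∈ U j := fun i j hij =>
    Submodule.sub_mem _ (humem i j hij) (hUmono hij.le (Submodule.starProjection_apply_mem _ _))
  have hgu : ∀ n, inner ℝ (g n) (u n) = a n ^ 2 := by
    intro n
    have : u n = g n + (U n).starProjection (u n) := by simp [hg]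
    conv_lhs => rw [this]
    rw [inner_add_right, hgorth n _ (Submodule.starProjection_apply_mem _ _), add_zero,
      real_inner_self_eq_norm_sq, hga]
  let e : Fin (2 * m) → V := fun i => (a (N + i))⁻¹ • g (N + i)
  have he : Orthonormal ℝ e := by
    constructor
    · intro i
      simp only [e, norm_smul, hga, Real.norm_of_nonneg (inv_nonneg.2 (hapos i).le)]
      exact inv_mul_cancel₀ (hapos i).ne'
    · intro i j hij
      simp only [e, inner_smul_left, inner_smul_right]
      rcases lt_or_gt_of_ne hij with h | h
      · have h' : (i : ℕ) < j := h
        rw [real_inner_comm, hgorth _ _ (hgmem (N + i) (N + j) (by omega))]; simp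
      · have h' : (j : ℕ) < i := h
        rw [hgorth _ _ (hgmem (N + j) (N + i) (by omega))]; simp
  let L : V →ₗ[ℝ] EuclideanSpace ℝ (Fin (2 * m)) :=
    (WithLp.linearEquiv 2 ℝ (Fin (2 * m) → ℝ)).symm.toLinearMap ∘ₗ
      LinearMap.pi fun j => (innerₛₗ ℝ (e j))
  have hLapp : ∀ x j, L x j = inner ℝ (e j) x := fun x j => rfl
  have hLnorm : ∀ x, ‖L x‖ ≤ ‖x‖ := by
    intro x
    have := he.sum_inner_products_le (s := Finset.univ) (x := x)
    rw [← sq_le_sq₀ (norm_nonneg _) (norm_nonneg _), EuclideanSpace.norm_sq_eq]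
    exact this
  have hLU : ∀ x ∈ U N, L x = 0 := by
    intro x hx
    ext j
    rw [hLapp]
    simp only [e, inner_smul_left]
    rw [hgorth _ _ (hUmono (by omega) hx)]; simp
  have hw1 : ∀ i : Fin (2 * m), ‖L (u (N + i))‖ ≤ σ N := by
    intro i
    refine le_trans ?_ (wg_bdd hK (U N) (hu (N + i)))
    rw [wg_infDist_eq]
    have : L (u (N + i)) = L (u (N + i) - (U N).starProjection (u (N + i))) := by
      rw [map_sub, hLU _ (Submodule.starProjection_apply_mem _ _), sub_zero]
    rw [this]
    exact hLnorm _
  have hEfin : FiniteDimensional ℝ E :=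
    Module.rank_lt_aleph0_iff.1 (hE.trans_lt (Cardinal.natCast_lt_aleph0))
  have hfr : Module.finrank ℝ (E.map L) ≤ m :=
    (Submodule.finrank_map_le L E).trans (Module.finrank_le_of_rank_le hE)
  have hw2 : ∀ i : Fin (2 * m), Metric.infDist (L (u (N + i)))
      (E.map L : Set (EuclideanSpace ℝ (Fin (2 * m)))) ≤ δ := by
    intro i
    refine le_trans ?_ (hEd _ (hu (N + i)))
    rw [wg_infDist_eq E]
    refine (Metric.infDist_le_dist_of_mem (y := L (E.starProjection (u (N + i)))) ?_).trans ?_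
    · exact ⟨_, Submodule.starProjection_apply_mem _ _, rfl⟩
    · rw [dist_eq_norm, ← map_sub]; exact hLnorm _
  have hB := wg_det_bound m (E.map L) hfr (fun i => L (u (N + i))) (σ N) δ hδ hδσ hw1 hw2
  have hdet : (EuclideanSpace.basisFun (Fin (2 * m)) ℝ).toBasis.det (fun i => L (u (N + i)))
      = ∏ i : Fin (2 * m), a (N + i) := by
    rw [Module.Basis.det_apply, Matrix.det_of_isUpperTriangular]
    · refine Finset.prod_congr rfl fun i _ => ?_
      simp only [Module.Basis.toMatrix_apply, OrthonormalBasis.coe_toBasis_repr_apply,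
        EuclideanSpace.basisFun_repr, hLapp, e, inner_smul_left, hgu]
      have := (hapos i).ne'
      simp; field_simp
    · intro i j hij
      have h' : (j : ℕ) < i := hij
      simp only [Module.Basis.toMatrix_apply, OrthonormalBasis.coe_toBasis_repr_apply,
        EuclideanSpace.basisFun_repr, hLapp, e, inner_smul_left]
      rw [hgorth _ _ (humem (N + j) (N + i) (by omega))]; simp
  have hlow : (γ * σ (N + 2 * m)) ^ (2 * m) ≤ ∏ i : Fin (2 * m), a (N + i) := by
    calc (γ * σ (N + 2 * m)) ^ (2 * m) = ∏ i : Fin (2 * m), (γ * σ (N + 2 * m)) := by simp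
      _ ≤ _ := Finset.prod_le_prod (fun _ _ => hτ0) fun i _ =>
        (mul_le_mul_of_nonneg_left (hanti (by omega)) hγ0.le).trans (haσ _)
  rw [hdet] at hB
  have hfin := (hlow.trans (le_abs_self _)).trans hB
  rw [pow_mul] at hfin
  have := hσ0 N
  exact (pow_le_pow_iff_left₀ (by positivity) (by positivity) hm.ne').1 hfin

lemma wg_exists {V : Type*} [NormedAddCommGroup V] [InnerProductSpace ℝ V]
    {K : Set V} (hK : IsCompact K) (n : ℕ) {δ : ℝ} (h : kolWidth K n < δ) :
    ∃ E : Submodule ℝ V, Module.rank ℝ E ≤ (n : Cardinal) ∧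
      ∀ x ∈ K, Metric.infDist x (E : Set V) ≤ δ := by
  have : Nonempty {E : Submodule ℝ V // Module.rank ℝ E ≤ (n : Cardinal)} := ⟨⟨⊥, by simp⟩⟩
  obtain ⟨E, hE⟩ := exists_lt_of_ciInf_lt h
  exact ⟨E.1, E.2, fun x hx => (wg_bdd hK E.1 hx).trans hE.le⟩

lemma wg_step {V : Type*} [NormedAddCommGroup V] [InnerProductSpace ℝ V]
    {K : Set V} (hK : IsCompact K) (u : ℕ → V) (hu : ∀ n, u n ∈ K)
    {γ : ℝ} (hγ : γ ∈ Set.Ioc (0 : ℝ) 1) (hwg : IsWeakGreedy u K γ)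
    (N m : ℕ) (hm : 0 < m) (D : ℝ) (hD : 0 < D) (hd : kolWidth K m ≤ D) :
    (γ * greedyErr u K (N + 2 * m)) ^ 2 ≤ 2 * greedyErr u K N * D := by
  have h : ∀ δ, D < δ → (γ * greedyErr u K (N + 2 * m)) ^ 2 ≤ 2 * greedyErr u K N * δ := by
    intro δ hδ
    obtain ⟨E, hE, hE'⟩ := wg_exists hK m (hd.trans_lt hδ)
    exact wg_key hK u hu hγ hwg N m hm δ (hD.trans hδ) E hE hE'
  have hc : Continuous fun δ : ℝ => 2 * greedyErr u K N * δ := by fun_prop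
  refine ge_of_tendsto (hc.continuousWithinAt (s := Set.Ioi D) (x := D)) ?_
  filter_upwards [self_mem_nhdsWithin] with δ hδ using h δ hδ

lemma wg_zero {V : Type*} [NormedAddCommGroup V] [InnerProductSpace ℝ V]
    {K : Set V} (hK : IsCompact K) (u : ℕ → V) (D : ℝ) (hD : 0 < D) (hd : kolWidth K 0 ≤ D) :
    greedyErr u K 0 ≤ D := by
  refine le_of_forall_gt_imp_ge_of_dense fun δ hδ => ?_
  obtain ⟨E, hE, hE'⟩ := wg_exists hK 0 (hd.trans_lt hδ)
  have : E = ⊥ := by simpa using hE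
  subst this
  refine wg_le _ (hD.trans hδ).le fun x hx => ?_
  refine le_trans (le_of_eq ?_) (hE' x hx)
  congr 1
  simp

lemma wg_pow {V : Type*} [NormedAddCommGroup V] [InnerProductSpace ℝ V]
    {K : Set V} (hK : IsCompact K) (u : ℕ → V) (hu : ∀ n, u n ∈ K)
    {γ : ℝ} (hγ : γ ∈ Set.Ioc (0 : ℝ) 1) (hwg : IsWeakGreedy u K γ)
    {C0 s : ℝ} (hC0 : 0 < C0) (hs : 0 < s)
    (hd : ∀ n : ℕ, kolWidth K n ≤ C0 * (max 1 (n : ℝ)) ^ (-s)) (k : ℕ) :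
    greedyErr u K (2 ^ k) * γ ^ 2 ≤ 2 * (2 ^ s) ^ 3 * C0 * ((2 ^ s)⁻¹) ^ k := by
  set q : ℝ := 2 ^ s with hq
  have hq1 : 1 ≤ q := Real.one_le_rpow one_le_two hs.le
  have hγ0 := hγ.1
  have hγ2 : γ ^ 2 ≤ 1 := pow_le_one₀ hγ0.le hγ.2
  have hz : greedyErr u K 0 ≤ C0 := wg_zero hK u C0 hC0 (by simpa using hd 0)
  have hb : ∀ k, greedyErr u K k * γ ^ 2 ≤ C0 := fun k => by
    have h1 := (wg_anti u hK (Nat.zero_le k)).trans hz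
    have h2 := wg_nonneg u K k
    nlinarith
  have hbase : ∀ k, k ≤ 1 → greedyErr u K (2 ^ k) * γ ^ 2 ≤ 2 * q ^ 3 * C0 * q⁻¹ ^ k := by
    intro k hk
    refine (hb _).trans ?_
    have h1 : q⁻¹ ^ 1 ≤ q⁻¹ ^ k :=
      pow_le_pow_of_le_one (by positivity) (inv_le_one_of_one_le₀ hq1) hk
    have h2 : (2 * q ^ 3 * C0) * q⁻¹ ^ 1 ≤ 2 * q ^ 3 * C0 * q⁻¹ ^ k := by gcongr
    refine le_trans ?_ h2
    have h3 : (2 * q ^ 3 * C0) * q⁻¹ ^ 1 = 2 * q ^ 2 * C0 := by field_simp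
    rw [h3]
    have : 1 ≤ q ^ 2 := one_le_pow₀ hq1
    nlinarith
  induction k with
  | zero => exact hbase 0 (by norm_num)
  | succ k ih =>
    rcases Nat.eq_zero_or_pos k with rfl | hk
    · exact hbase 1 le_rfl
    obtain ⟨j, rfl⟩ : ∃ j, k = j + 1 := ⟨k - 1, by omega⟩
    have hp : (max 1 ((2 ^ j : ℕ) : ℝ)) ^ (-s) = q⁻¹ ^ j := by
      rw [max_eq_right (by exact_mod_cast Nat.one_le_two_pow)]
      push_cast
      rw [Real.rpow_neg (by positivity), hq, inv_pow, ← Real.rpow_natCast, ← Real.rpow_natCast,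
        ← Real.rpow_mul (by norm_num), ← Real.rpow_mul (by norm_num), mul_comm]
    have hst := wg_step hK u hu hγ hwg (2 ^ (j + 1)) (2 ^ j) (by positivity)
      (C0 * q⁻¹ ^ j) (by positivity) (by rw [← hp]; exact hd _)
    have e1 : 2 ^ (j + 1) + 2 * 2 ^ j = 2 ^ (j + 1 + 1) := by ring
    rw [e1] at hst
    set A := greedyErr u K (2 ^ (j + 1 + 1))
    set B := greedyErr u K (2 ^ (j + 1))
    have hA : 0 ≤ A := wg_nonneg _ _ _
    refine (sq_le_sq₀ (by positivity) (by positivity)).1 ?_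
    calc (A * γ ^ 2) ^ 2 = (γ * A) ^ 2 * γ ^ 2 := by ring
      _ ≤ 2 * B * (C0 * q⁻¹ ^ j) * γ ^ 2 := by gcongr
      _ = 2 * (C0 * q⁻¹ ^ j) * (B * γ ^ 2) := by ring
      _ ≤ 2 * (C0 * q⁻¹ ^ j) * (2 * q ^ 3 * C0 * q⁻¹ ^ (j + 1)) := by gcongr
      _ = (2 * q ^ 3 * C0 * q⁻¹ ^ (j + 1 + 1)) ^ 2 := by
        simp only [pow_succ]; field_simp

theorem statement0 {V : Type*} [NormedAddCommGroup V] [InnerProductSpace ℝ V] [CompleteSpace V]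
    (K : Set V) (hK : IsCompact K) (u : ℕ → V) (hu : ∀ n, u n ∈ K)
    (γ : ℝ) (hγ : γ ∈ Set.Ioc (0 : ℝ) 1) (hwg : IsWeakGreedy u K γ)
    (C0 s : ℝ) (hC0 : 0 < C0) (hs : 0 < s)
    (hd : ∀ n : ℕ, kolWidth K n ≤ C0 * (max 1 (n : ℝ)) ^ (-s)) :
    ∀ n : ℕ, greedyErr u K n ≤
      (2 : ℝ) ^ (4 * s + 1) * C0 * γ ^ (-(2 : ℝ)) * (max 1 (n : ℝ)) ^ (-s) := by
  intro n
  have hγ0 := hγ.1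
  have hγ2 : γ ^ 2 ≤ 1 := pow_le_one₀ hγ0.le hγ.2
  set q : ℝ := 2 ^ s with hq
  have hq1 : 1 ≤ q := Real.one_le_rpow one_le_two hs.le
  have h2 : (2 : ℝ) ^ (4 * s + 1) = 2 * q ^ 4 := by
    rw [Real.rpow_add (by norm_num), Real.rpow_one, mul_comm 4 s, Real.rpow_mul (by norm_num),
      mul_comm]
    norm_cast
  have hg : γ ^ (-(2 : ℝ)) = (γ ^ 2)⁻¹ := by
    rw [Real.rpow_neg hγ0.le]; norm_cast
  rw [h2, hg]
  suffices h : greedyErr u K n * γ ^ 2 ≤ 2 * q ^ 4 * C0 * (max 1 (n : ℝ)) ^ (-s) by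
    calc greedyErr u K n = greedyErr u K n * γ ^ 2 * (γ ^ 2)⁻¹ := by field_simp
      _ ≤ 2 * q ^ 4 * C0 * (max 1 (n : ℝ)) ^ (-s) * (γ ^ 2)⁻¹ := by gcongr
      _ = _ := by ring
  rcases Nat.eq_zero_or_pos n with rfl | hn
  · have hz : greedyErr u K 0 ≤ C0 := wg_zero hK u C0 hC0 (by simpa using hd 0)
    have h0 := wg_nonneg u K 0
    have : 1 ≤ q ^ 4 := one_le_pow₀ hq1
    simp
    nlinarith
  set k := Nat.log 2 n
  have hk1 : 2 ^ k ≤ n := Nat.pow_log_le_self 2 hn.ne'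
  have hk2 : n < 2 ^ (k + 1) := Nat.lt_pow_succ_log_self (by norm_num) n
  have hp := wg_pow hK u hu hγ hwg hC0 hs hd k
  rw [← hq] at hp
  have hn1 : (1 : ℝ) ≤ n := by exact_mod_cast hn
  rw [max_eq_right hn1]
  have hkk : q⁻¹ ^ k ≤ q * (n : ℝ) ^ (-s) := by
    have h3 : (n : ℝ) ^ s ≤ q ^ (k + 1) := by
      rw [hq, ← Real.rpow_natCast, ← Real.rpow_mul (by norm_num), mul_comm s,
        Real.rpow_mul (by norm_num), Real.rpow_natCast]
      exact Real.rpow_le_rpow (by positivity) (by exact_mod_cast hk2.le) hs.le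
    have hns : 0 < (n : ℝ) ^ s := by positivity
    rw [Real.rpow_neg (by positivity), inv_pow, ← div_eq_mul_inv, le_div_iff₀ hns,
      inv_mul_le_iff₀ (by positivity)]
    rwa [← pow_succ]
  calc greedyErr u K n * γ ^ 2 ≤ greedyErr u K (2 ^ k) * γ ^ 2 := by
        gcongr; exact wg_anti u hK hk1
    _ ≤ 2 * q ^ 3 * C0 * q⁻¹ ^ k := hp
    _ ≤ 2 * q ^ 3 * C0 * (q * (n : ℝ) ^ (-s)) := by gcongr
    _ = _ := by ring
end

section
/- Let V be a real Hilbert space, K a compact subset of V, and let (u^k)_{k≥0} be a weak greedy sequence in K with parameter γ ∈ (0,1]. If for some constants c0, C0 > 0 and s > 0 the Kolmogorov widths satisfy d_n(K) ≤ C0·e^{-c0·n^s} for all n ≥ 0, then σ_n(K) ≤ C1·γ^{-1}·e^{-c1·n^s} for all n ≥ 0, where c1 = (c0/2)·3^{-s} and C1 = C0·max{√2, e^{c1}}. -/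
open InnerProductSpace in
/-- AM-GM for determinants: if the Frobenius norm squared is at most `N` then `det² ≤ 1`. -/
lemma det_sq_le_one {N : ℕ} (C : Matrix (Fin N) (Fin N) ℝ)
    (h : ∑ i, ∑ j, C i j ^ 2 ≤ N) : C.det ^ 2 ≤ 1 := by
  have hps := Matrix.posSemidef_conjTranspose_mul_self C
  have hdet : C.det ^ 2 = (C.conjTranspose * C).det := by
    rw [Matrix.det_mul, Matrix.det_conjTranspose]; simp [sq]
  have htr : (C.conjTranspose * C).trace ≤ N := by
    refine le_trans (le_of_eq ?_) h
    rw [Finset.sum_comm]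
    simp [Matrix.trace, Matrix.mul_apply, sq]
  rw [hdet, hps.1.det_eq_prod_eigenvalues]
  rw [hps.1.trace_eq_sum_eigenvalues] at htr
  simp only [RCLike.ofReal_real_eq_id, id] at htr ⊢
  calc ∏ i, hps.1.eigenvalues i ≤ ∏ i, Real.exp (hps.1.eigenvalues i - 1) := by
        apply Finset.prod_le_prod
        · intro i _; exact hps.eigenvalues_nonneg i
        · intro i _; linarith [Real.add_one_le_exp (hps.1.eigenvalues i - 1)]
    _ = Real.exp (∑ i, (hps.1.eigenvalues i - 1)) := (Real.exp_sum _ _).symm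
    _ ≤ 1 := by
        rw [Real.exp_le_one_iff]
        simp only [Finset.sum_sub_distrib, Finset.sum_const, Finset.card_univ, Fintype.card_fin]
        simp only [nsmul_eq_mul, mul_one]
        linarith

/-- An orthonormal basis of `ℝ^N` adapted to a subspace. -/
lemma exists_adapted {N : ℕ} (W : Submodule ℝ (EuclideanSpace ℝ (Fin N))) :
    ∃ b : OrthonormalBasis (Fin N) ℝ (EuclideanSpace ℝ (Fin N)),
      ∀ i : Fin N, Module.finrank ℝ W ≤ (i : ℕ) → ∀ w ∈ W, inner ℝ (b i) w = 0 := by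
  classical
  set k := Module.finrank ℝ W with hk
  have hkN : k ≤ N := by
    have := Submodule.finrank_le W
    simpa using this
  let e := stdOrthonormalBasis ℝ W
  let v : Fin N → EuclideanSpace ℝ (Fin N) := fun i =>
    if h : (i : ℕ) < k then (e ⟨i, h⟩ : EuclideanSpace ℝ (Fin N)) else 0
  let S : Set (Fin N) := {i | (i : ℕ) < k}
  have hv : Orthonormal ℝ (S.domRestrict v) := by
    have h1 : Orthonormal ℝ (fun i : Fin k => (e i : EuclideanSpace ℝ (Fin N))) :=
      e.orthonormal.comp_linearIsometry W.subtypeₗᵢ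
    have h2 := h1.comp (fun i : S => (⟨(i.1 : ℕ), i.2⟩ : Fin k)) (by
      intro a b hab
      simp only [Fin.mk.injEq] at hab
      exact Subtype.ext (Fin.ext hab))
    convert h2 using 1
    ext1 i
    have : ((i : Fin N) : ℕ) < k := i.2
    simp [v, this]
  obtain ⟨b, hb⟩ := hv.exists_orthonormalBasis_extension_of_card_eq (by simp)
  refine ⟨b, fun i hi w hw => ?_⟩
  have h3 := congrArg (W.subtype) (e.sum_repr ⟨w, hw⟩)
  simp only [map_sum, map_smul, Submodule.subtype_apply] at h3
  rw [← h3, inner_sum]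
  apply Finset.sum_eq_zero
  intro j _
  rw [inner_smul_right]
  have hj : (j : ℕ) < k := j.2
  have hb' := hb ⟨j, hj.trans_le hkN⟩ hj
  have : (e j : EuclideanSpace ℝ (Fin N)) = b ⟨j, hj.trans_le hkN⟩ := by
    rw [hb']; simp [v, hj]
  rw [this, b.orthonormal.2, mul_zero]
  intro h
  rw [h] at hi
  simp at hi
  omega

lemma det_sq_bound {N m : ℕ} (a : Fin N → EuclideanSpace ℝ (Fin N))
    (W : Submodule ℝ (EuclideanSpace ℝ (Fin N))) (hW : Module.finrank ℝ W ≤ m) (hm : m ≤ N)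
    (C ε : ℝ) (hε : 0 < ε) (hεC : ε ≤ C) (ha : ∀ i, ‖a i‖ ≤ C)
    (haW : ∀ i, ∃ w ∈ W, ‖a i - w‖ ≤ ε) :
    (Matrix.of fun i j => a i j).det ^ 2 ≤ 2 ^ N * (C ^ 2) ^ m * (ε ^ 2) ^ (N - m) := by
  obtain ⟨b, hb⟩ := exists_adapted W
  have hC : 0 < C := hε.trans_le hεC
  set k := Module.finrank ℝ W with hk
  let B : Matrix (Fin N) (Fin N) ℝ := Matrix.of fun i j => inner ℝ (b j) (a i)
  let Q : Matrix (Fin N) (Fin N) ℝ := Matrix.of fun i j => b j i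
  have hBQ : B = (Matrix.of fun i j => a i j) * Q := by
    ext i j
    simp [B, Q, Matrix.mul_apply, PiLp.inner_apply]
  have hQ : Q.det ^ 2 = 1 := by
    have h1 := (EuclideanSpace.basisFun (Fin N) ℝ).det_to_matrix_orthonormalBasis_real b
    have h2 : (EuclideanSpace.basisFun (Fin N) ℝ).toBasis.det b = Q.det := by
      rw [Module.Basis.det_apply]
      congr 1
    rw [h2] at h1
    rcases h1 with h | h <;> rw [h] <;> norm_num
  have hdet : (Matrix.of fun i j => a i j).det ^ 2 = B.det ^ 2 := by
    rw [hBQ, Matrix.det_mul, mul_pow, hQ, mul_one]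
  let t : Fin N → ℝ := fun j => if (j : ℕ) < k then 2 * C ^ 2 else 2 * ε ^ 2
  have ht : ∀ j, 0 < t j := by
    intro j; simp only [t]; split_ifs <;> positivity
  let D : Matrix (Fin N) (Fin N) ℝ := B * Matrix.diagonal (fun j => (Real.sqrt (t j))⁻¹)
  have hD : D.det ^ 2 ≤ 1 := by
    apply det_sq_le_one
    have hrow : ∀ i, ∑ j, D i j ^ 2 ≤ 1 := by
      intro i
      have e1 : ∀ j, D i j ^ 2 ≤ (1 / (2 * C ^ 2)) * B i j ^ 2 +
          (if (j : ℕ) < k then 0 else (1 / (2 * ε ^ 2)) * B i j ^ 2) := by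
        intro j
        have : D i j ^ 2 = B i j ^ 2 / t j := by
          simp only [D, Matrix.mul_diagonal]
          rw [mul_pow, inv_pow, Real.sq_sqrt (ht j).le]; rfl
        rw [this]
        simp only [t]
        split_ifs
        · apply le_of_eq; ring
        · have : 0 ≤ (1 / (2 * C ^ 2)) * B i j ^ 2 := by positivity
          have e : B i j ^ 2 / (2 * ε ^ 2) = 1 / (2 * ε ^ 2) * B i j ^ 2 := by ring
          linarith
      obtain ⟨w, hw, hwε⟩ := haW i
      have e2 : ∀ j : Fin N, (if (j : ℕ) < k then 0 else (1 / (2 * ε ^ 2)) * B i j ^ 2) ≤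
          (1 / (2 * ε ^ 2)) * ‖inner ℝ (b j) (a i - w)‖ ^ 2 := by
        intro j
        split_ifs with hj
        · positivity
        · rw [inner_sub_right, hb j (by omega) w hw, sub_zero, Real.norm_eq_abs, sq_abs]; rfl
      have e3 : ∑ j, B i j ^ 2 = ‖a i‖ ^ 2 := by
        rw [← b.sum_sq_norm_inner_right (a i)]
        apply Finset.sum_congr rfl
        intro j _
        rw [Real.norm_eq_abs, sq_abs]; rfl
      calc ∑ j, D i j ^ 2 ≤ ∑ j, ((1 / (2 * C ^ 2)) * B i j ^ 2 +
            (1 / (2 * ε ^ 2)) * ‖inner ℝ (b j) (a i - w)‖ ^ 2) :=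
            Finset.sum_le_sum fun j _ => (e1 j).trans (by linarith [e2 j])
        _ = (1 / (2 * C ^ 2)) * ‖a i‖ ^ 2 + (1 / (2 * ε ^ 2)) * ‖a i - w‖ ^ 2 := by
            rw [Finset.sum_add_distrib, ← Finset.mul_sum, ← Finset.mul_sum, e3,
              b.sum_sq_norm_inner_right]
        _ ≤ (1 / (2 * C ^ 2)) * C ^ 2 + (1 / (2 * ε ^ 2)) * ε ^ 2 := by
            have := ha i
            gcongr
        _ = 1 := by field_simp; norm_num
    calc ∑ i, ∑ j, D i j ^ 2 ≤ ∑ i : Fin N, (1 : ℝ) := Finset.sum_le_sum fun i _ => hrow i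
      _ = N := by simp
  have hDB : B.det ^ 2 = D.det ^ 2 * ∏ j, t j := by
    simp only [D, Matrix.det_mul, Matrix.det_diagonal]
    rw [mul_pow, ← Finset.prod_pow, mul_assoc, ← Finset.prod_mul_distrib]
    rw [Finset.prod_eq_one, mul_one]
    intro j _
    rw [inv_pow, Real.sq_sqrt (ht j).le, inv_mul_cancel₀ (ht j).ne']
  have hprod : ∏ j, t j ≤ 2 ^ N * (C ^ 2) ^ m * (ε ^ 2) ^ (N - m) := by
    have e1 : ∏ j, t j ≤ ∏ j : Fin N, (if (j : ℕ) < m then 2 * C ^ 2 else 2 * ε ^ 2) := by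
      apply Finset.prod_le_prod
      · intro j _; exact (ht j).le
      · intro j _
        simp only [t]
        have : ε ^ 2 ≤ C ^ 2 := by gcongr
        split_ifs with h1 h2 <;> linarith
    refine e1.trans (le_of_eq ?_)
    rw [Fin.prod_univ_eq_prod_range (fun j => if j < m then 2 * C ^ 2 else 2 * ε ^ 2) N]
    rw [← Finset.prod_range_mul_prod_Ico _ hm]
    rw [Finset.prod_congr rfl (g := fun _ => 2 * C ^ 2)
      (by intro j hj; rw [if_pos (Finset.mem_range.1 hj)])]
    rw [Finset.prod_congr (s₁ := Finset.Ico m N) rfl (g := fun _ => 2 * ε ^ 2)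
      (by intro j hj; rw [if_neg (by have := Finset.mem_Ico.1 hj; omega)])]
    simp only [Finset.prod_const, Finset.card_range, Nat.card_Ico]
    rw [mul_pow, mul_pow]
    have : (2 : ℝ) ^ N = 2 ^ m * 2 ^ (N - m) := by rw [← pow_add]; congr 1; omega
    rw [this]; ring
  rw [hdet, hDB]
  have hp : 0 ≤ ∏ j, t j := Finset.prod_nonneg fun j _ => (ht j).le
  nlinarith

open InnerProductSpace in
lemma greedy_pow_bound {V : Type*} [NormedAddCommGroup V] [InnerProductSpace ℝ V]
    (u : ℕ → V) (N m : ℕ) (hm : m ≤ N) (E : Submodule ℝ V) (hE : Module.rank ℝ E ≤ (m : Cardinal))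
    (C ε g : ℝ) (hε : 0 < ε) (hεC : ε ≤ C) (hu : ∀ i, ‖u i‖ ≤ C)
    (hdE : ∀ i, Metric.infDist (u i) (E : Set V) < ε) (hg : 0 < g)
    (hgs : ∀ i < N, g ≤ Metric.infDist (u i) (Submodule.span ℝ (u '' Set.Iio i) : Set V)) :
    (g ^ 2) ^ N ≤ 2 ^ N * (C ^ 2) ^ m * (ε ^ 2) ^ (N - m) := by
  have hgs' : ∀ i < N, g ≤ ‖gramSchmidt ℝ u i‖ := by
    intro i hi
    refine (hgs i hi).trans ?_
    have hmem : u i - gramSchmidt ℝ u i ∈ Submodule.span ℝ (u '' Set.Iio i) := by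
      rw [← span_gramSchmidt_Iio ℝ u i]
      nth_rewrite 1 [gramSchmidt_def'' ℝ u i]
      rw [add_sub_cancel_left]
      apply Submodule.sum_mem
      intro j hj
      apply Submodule.smul_mem
      apply Submodule.subset_span
      exact ⟨j, by simpa using hj, rfl⟩
    have := Metric.infDist_le_dist_of_mem (x := u i) (SetLike.mem_coe.2 hmem)
    refine this.trans (le_of_eq ?_)
    rw [dist_eq_norm]; congr 1; abel
  let q : Fin N → V := fun j => (‖gramSchmidt ℝ u j‖)⁻¹ • gramSchmidt ℝ u j
  have hpos : ∀ j : Fin N, 0 < ‖gramSchmidt ℝ u j‖ := fun j => hg.trans_le (hgs' j j.2)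
  have hq : Orthonormal ℝ q := by
    constructor
    · intro j
      simp only [q, norm_smul, norm_inv, norm_norm]
      exact inv_mul_cancel₀ (hpos j).ne'
    · intro i j hij
      simp only [q, inner_smul_left, inner_smul_right]
      rw [gramSchmidt_orthogonal ℝ u (by intro h; exact hij (Fin.ext h))]
      simp
  let T : V →ₗ[ℝ] EuclideanSpace ℝ (Fin N) :=
    { toFun := fun x => WithLp.toLp 2 (fun j => inner ℝ (q j) x)
      map_add' := by intro x y; ext j; simp [inner_add_right]
      map_smul' := by intro c x; ext j; simp [inner_smul_right] }
  have hTa : ∀ x j, T x j = inner ℝ (q j) x := fun x j => rfl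
  have hT : ∀ x, ‖T x‖ ≤ ‖x‖ := by
    intro x
    have h1 := hq.sum_inner_products_le x (s := Finset.univ)
    have h2 : ‖T x‖ ^ 2 ≤ ‖x‖ ^ 2 := by
      rw [EuclideanSpace.norm_sq_eq]; exact h1
    exact le_of_sq_le_sq h2 (norm_nonneg _)
  have hrank : Module.finrank ℝ (E.map T) ≤ m := by
    apply Module.finrank_le_of_rank_le
    have h1 := lift_rank_map_le T E
    have h2 := h1.trans (Cardinal.lift_le.2 hE)
    simpa using h2
  have hmain := det_sq_bound (fun i : Fin N => T (u i)) (E.map T) hrank hm C ε hε hεC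
    (fun i => (hT _).trans (hu _)) (by
      intro i
      obtain ⟨w, hw, hwd⟩ := (Metric.infDist_lt_iff ⟨0, E.zero_mem⟩).1 (hdE i)
      refine ⟨T w, Submodule.mem_map_of_mem hw, ?_⟩
      rw [← map_sub]
      refine (hT _).trans ?_
      rw [← dist_eq_norm]; exact hwd.le)
  refine le_trans ?_ hmain
  have htri : (Matrix.of fun i j => T (u (i : Fin N)) j).IsLowerTriangular := by
    intro i j hij
    have hij' : (i : ℕ) < j := by simpa using hij
    simp only [Matrix.of_apply, hTa, q, inner_smul_left]
    rw [gramSchmidt_inv_triangular ℝ u hij', mul_zero]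
  rw [Matrix.det_of_isLowerTriangular _ htri, ← Finset.prod_pow]
  have hdiag : ∀ i : Fin N, (Matrix.of fun i j => T (u (i : Fin N)) j) i i
      = ‖gramSchmidt ℝ u i‖ := by
    intro i
    simp only [Matrix.of_apply, hTa, q, inner_smul_left]
    have : inner ℝ (gramSchmidt ℝ u (i : ℕ)) (u (i : ℕ)) = ‖gramSchmidt ℝ u i‖ ^ 2 := by
      conv_lhs => arg 3; rw [gramSchmidt_def'' ℝ u i]
      rw [inner_add_right, inner_sum, Finset.sum_eq_zero, real_inner_self_eq_norm_sq, add_zero]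
      intro j hj
      rw [inner_smul_right, gramSchmidt_orthogonal ℝ u (by simp at hj; omega), mul_zero]
    rw [this]
    have := (hpos i).ne'
    simp only [conj_trivial]
    field_simp
  calc (g ^ 2) ^ N = ∏ i : Fin N, g ^ 2 := by simp
    _ ≤ _ := by
      apply Finset.prod_le_prod
      · intro i _; positivity
      · intro i _
        rw [hdiag]
        have := hgs' i i.2
        gcongr

lemma le_biSup_infDist {V : Type*} [NormedAddCommGroup V] [InnerProductSpace ℝ V]
    (K : Set V) (hK : IsCompact K) (E : Submodule ℝ V) {x : V} (hx : x ∈ K) :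
    Metric.infDist x (E : Set V) ≤ ⨆ y ∈ K, Metric.infDist y (E : Set V) := by
  obtain ⟨R, hR⟩ := hK.isBounded.exists_norm_le
  have hR0 : 0 ≤ R := (norm_nonneg x).trans (hR x hx)
  have hb : BddAbove (Set.range fun y => ⨆ (_ : y ∈ K), Metric.infDist y (E : Set V)) := by
    refine ⟨R, ?_⟩
    rintro _ ⟨y, rfl⟩
    refine Real.iSup_le (fun hy => ?_) hR0
    have := Metric.infDist_le_dist_of_mem (x := y) (SetLike.mem_coe.2 E.zero_mem)
    rw [dist_zero_right] at this
    exact this.trans (hR y hy)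
  refine le_ciSup_of_le hb x ?_
  rw [ciSup_pos hx]

lemma exists_subspace {V : Type*} [NormedAddCommGroup V] [InnerProductSpace ℝ V]
    (K : Set V) (hK : IsCompact K) (n : ℕ) (ε : ℝ) (h : kolWidth K n < ε) :
    ∃ E : Submodule ℝ V, Module.rank ℝ E ≤ (n : Cardinal) ∧
      ∀ x ∈ K, Metric.infDist x (E : Set V) < ε := by
  have : Nonempty {E : Submodule ℝ V // Module.rank ℝ E ≤ (n : Cardinal)} :=
    ⟨⟨⊥, by simp⟩⟩
  obtain ⟨E, hE⟩ := exists_lt_of_ciInf_lt h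
  exact ⟨E.1, E.2, fun x hx => (le_biSup_infDist K hK E.1 hx).trans_lt hE⟩

lemma greedyErr_anti {V : Type*} [NormedAddCommGroup V] [InnerProductSpace ℝ V]
    (u : ℕ → V) (K : Set V) (hK : IsCompact K) {i n : ℕ} (h : i ≤ n) :
    greedyErr u K n ≤ greedyErr u K i := by
  have h0 : 0 ≤ greedyErr u K i :=
    Real.iSup_nonneg fun x => Real.iSup_nonneg fun _ => Metric.infDist_nonneg
  refine Real.iSup_le (fun x => Real.iSup_le (fun hx => ?_) h0) h0
  refine le_trans ?_ (le_biSup_infDist K hK _ hx)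
  apply Metric.infDist_le_infDist_of_subset
  · exact Submodule.span_mono (Set.image_mono (Set.Iio_subset_Iio h))
  · exact ⟨0, Submodule.zero_mem _⟩

theorem statement1 {V : Type*} [NormedAddCommGroup V] [InnerProductSpace ℝ V] [CompleteSpace V]
    (K : Set V) (hK : IsCompact K) (u : ℕ → V) (hu : ∀ n, u n ∈ K)
    (γ : ℝ) (hγ : γ ∈ Set.Ioc (0 : ℝ) 1) (hwg : IsWeakGreedy u K γ)
    (c0 C0 s : ℝ) (hc0 : 0 < c0) (hC0 : 0 < C0) (hs : 0 < s)
    (hd : ∀ n : ℕ, kolWidth K n ≤ C0 * Real.exp (-(c0 * (n : ℝ) ^ s))) :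
    ∀ n : ℕ, greedyErr u K n ≤
      C0 * max (Real.sqrt 2) (Real.exp (c0 / 2 * (3 : ℝ) ^ (-s))) * γ⁻¹ *
        Real.exp (-(c0 / 2 * (3 : ℝ) ^ (-s) * (n : ℝ) ^ s)) := by
  intro n
  obtain ⟨hγ0, hγ1⟩ := hγ
  have hnorm : ∀ x ∈ K, ‖x‖ ≤ C0 := by
    intro x hx
    apply le_of_forall_gt_imp_ge_of_dense
    intro ε hε
    have h0 : kolWidth K 0 < ε := by
      refine (hd 0).trans_lt ?_
      simpa [Real.zero_rpow hs.ne'] using hε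
    obtain ⟨E, hE, hEx⟩ := exists_subspace K hK 0 ε h0
    have hE0 : E = ⊥ := by
      have : Module.rank ℝ E = 0 := by simpa using hE
      exact Submodule.rank_eq_zero.1 this
    have := hEx x hx
    rw [hE0] at this
    simp at this
    exact this.le
  set c1 := c0 / 2 * (3 : ℝ) ^ (-s) with hc1
  set G := greedyErr u K n with hG
  have hsuff : γ * G ≤ Real.sqrt 2 * C0 * Real.exp (-(c1 * (n : ℝ) ^ s)) := by
    rcases Nat.eq_zero_or_pos n with hn | hn
    · have hGC : G ≤ C0 := by
        rw [hG]
        refine Real.iSup_le (fun x => Real.iSup_le (fun hx => ?_) hC0.le) hC0.le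
        refine (Metric.infDist_le_dist_of_mem
          (SetLike.mem_coe.2 (Submodule.zero_mem _))).trans ?_
        rw [dist_zero_right]; exact hnorm x hx
      have h2 : 1 ≤ Real.sqrt 2 := Real.one_le_sqrt.2 (by norm_num)
      rw [hn]
      simp only [Nat.cast_zero, Real.zero_rpow hs.ne', mul_zero, neg_zero, Real.exp_zero, mul_one]
      nlinarith
    by_cases hG0 : γ * G ≤ 0
    · exact hG0.trans (by positivity)
    push Not at hG0
    set m := (n + 2) / 3 with hm
    have hm1 : 1 ≤ m := by omega
    have hmn : n ≤ 3 * m := by omega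
    have hmn2 : 2 * m ≤ n + 1 := by omega
    set η := C0 * Real.exp (-(c0 * (m : ℝ) ^ s)) with hη
    have hη0 : 0 < η := by positivity
    have hηC : η < C0 := by
      have : Real.exp (-(c0 * (m : ℝ) ^ s)) < 1 := by
        rw [Real.exp_lt_one_iff]
        have : 0 < c0 * (m : ℝ) ^ s := by positivity
        linarith
      nlinarith
    have hstep : ∀ ε ∈ Set.Ioo η C0, ((γ * G) ^ 2) ^ (n + 1) ≤
        2 ^ (n + 1) * (C0 ^ 2) ^ m * (ε ^ 2) ^ (n + 1 - m) := by
      intro ε hε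
      obtain ⟨E, hE, hEx⟩ := exists_subspace K hK m ε ((hd m).trans_lt hε.1)
      refine greedy_pow_bound u (n + 1) m (by omega) E hE C0 ε (γ * G) (hη0.trans hε.1) hε.2.le
        (fun i => hnorm _ (hu i)) (fun i => hEx _ (hu i)) hG0 ?_
      intro i hi
      refine le_trans ?_ (hwg i)
      exact mul_le_mul_of_nonneg_left (greedyErr_anti u K hK (by omega)) hγ0.le
    have hlim : ((γ * G) ^ 2) ^ (n + 1) ≤
        2 ^ (n + 1) * (C0 ^ 2) ^ m * (η ^ 2) ^ (n + 1 - m) := by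
      refine ContinuousWithinAt.closure_le (s := Set.Ioo η C0) (x := η)
        (f := fun _ => ((γ * G) ^ 2) ^ (n + 1))
        (g := fun ε => 2 ^ (n + 1) * (C0 ^ 2) ^ m * (ε ^ 2) ^ (n + 1 - m)) ?_ ?_ ?_ hstep
      · rw [closure_Ioo hηC.ne]; exact ⟨le_rfl, hηC.le⟩
      · exact continuousWithinAt_const
      · exact Continuous.continuousWithinAt (by fun_prop)
    have hexp : 2 ^ (n + 1) * (C0 ^ 2) ^ m * (η ^ 2) ^ (n + 1 - m) ≤
        ((Real.sqrt 2 * C0 * Real.exp (-(c1 * (n : ℝ) ^ s))) ^ 2) ^ (n + 1) := by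
      have e1 : (C0 ^ 2) ^ (n + 1) = (C0 ^ 2) ^ m * (C0 ^ 2) ^ (n + 1 - m) := by
        rw [← pow_add]; congr 1; omega
      have e2 : (Real.exp (-(c0 * (m : ℝ) ^ s)) ^ 2) ^ (n + 1 - m) ≤
          (Real.exp (-(c1 * (n : ℝ) ^ s)) ^ 2) ^ (n + 1) := by
        rw [← pow_mul, ← pow_mul, ← Real.exp_nat_mul, ← Real.exp_nat_mul, Real.exp_le_exp]
        have e3 : (3 : ℝ) ^ (-s) * (n : ℝ) ^ s ≤ (m : ℝ) ^ s := by
          have : (3 : ℝ) ^ (-s) * (n : ℝ) ^ s = ((n : ℝ) / 3) ^ s := by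
            rw [Real.div_rpow (by positivity) (by norm_num), Real.rpow_neg (by norm_num)]
            field_simp
          rw [this]
          apply Real.rpow_le_rpow (by positivity) _ hs.le
          have : (n : ℝ) ≤ 3 * m := by exact_mod_cast hmn
          linarith
        have e4 : ((n + 1 : ℕ) : ℝ) ≤ 2 * ((n + 1 - m : ℕ) : ℝ) := by
          exact_mod_cast (by omega : n + 1 ≤ 2 * (n + 1 - m))
        have e5 : c1 * (n : ℝ) ^ s ≤ c0 / 2 * (m : ℝ) ^ s := by
          rw [hc1, mul_assoc]; exact mul_le_mul_of_nonneg_left e3 (by positivity)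
        have e6 : ((n + 1 : ℕ) : ℝ) * (c1 * (n : ℝ) ^ s) ≤
            (2 * ((n + 1 - m : ℕ) : ℝ)) * (c0 / 2 * (m : ℝ) ^ s) := by
          apply mul_le_mul e4 e5 (by positivity) (by positivity)
        rw [Nat.cast_mul 2 (n + 1 - m), Nat.cast_mul 2 (n + 1)]
        push_cast at e6 ⊢
        linarith
      have e7 : Real.sqrt 2 ^ 2 = 2 := Real.sq_sqrt (by norm_num)
      have e8 : (Real.sqrt 2 * C0 * Real.exp (-(c1 * (n : ℝ) ^ s))) ^ 2 =
          2 * C0 ^ 2 * Real.exp (-(c1 * (n : ℝ) ^ s)) ^ 2 := by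
        rw [mul_pow, mul_pow, e7]
      rw [e8, mul_pow _ _ (n + 1), mul_pow _ _ (n + 1), e1, hη, mul_pow C0 _ 2, mul_pow _ _ (n + 1 - m)]
      calc _ = 2 ^ (n + 1) * ((C0 ^ 2) ^ m * (C0 ^ 2) ^ (n + 1 - m)) *
            (Real.exp (-(c0 * (m : ℝ) ^ s)) ^ 2) ^ (n + 1 - m) := by ring
        _ ≤ _ := mul_le_mul_of_nonneg_left e2 (by positivity)
    have hfin := hlim.trans hexp
    have h1 := le_of_pow_le_pow_left₀ (Nat.succ_ne_zero n) (by positivity) hfin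
    exact le_of_sq_le_sq h1 (by positivity)
  have h2 : G ≤ Real.sqrt 2 * C0 * Real.exp (-(c1 * (n : ℝ) ^ s)) * γ⁻¹ := by
    rw [← div_eq_mul_inv, le_div_iff₀ hγ0]; linarith
  refine h2.trans ?_
  calc _ = C0 * Real.sqrt 2 * γ⁻¹ * Real.exp (-(c1 * (n : ℝ) ^ s)) := by ring
    _ ≤ _ := by
      gcongr
      exact le_max_left _ _
end

section
/- For every s > 0 and γ ∈ (0,1] there exists a constant C > 0 depending only on s and γ with the following property: for every real Hilbert space V, every compact subset K of V, every n* ≥ 0, every C0 > 0, and every weak greedy sequence (u^k)_{k≥0} in K with parameter γ, if d_n(K) ≤ C0·(max{1,n})^{-s} holds for all 0 ≤ n ≤ n*, then σ_n(K) ≤ C·C0·(max{1,n})^{-s} holds for all 0 ≤ n ≤ n*; in particular C is independent of n*. -/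
universe u

lemma wg_hadamard {F : Type*} [NormedAddCommGroup F] [InnerProductSpace ℝ F] {n : ℕ}
    (b : OrthonormalBasis (Fin n) ℝ F) (v : Fin n → F) :
    |b.toBasis.det v| ≤ ∏ i, ‖v i‖ := by
  have : Fact (Module.finrank ℝ F = n) := ⟨by
    rw [Module.finrank_eq_card_basis b.toBasis, Fintype.card_fin]⟩
  rw [← (b.toBasis.orientation).volumeForm_robust' b v]
  exact (b.toBasis.orientation).abs_volumeForm_apply_le v

lemma wg_adapted {k m : ℕ} (W : Submodule ℝ (EuclideanSpace ℝ (Fin k)))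
    (hW : Module.finrank ℝ W ≤ m) :
    ∃ b : OrthonormalBasis (Fin k) ℝ (EuclideanSpace ℝ (Fin k)),
      ∀ i : Fin k, m ≤ i.1 → ∀ w ∈ W, inner ℝ (b i) w = 0 := by
  classical
  set r := Module.finrank ℝ W with hr
  let c := stdOrthonormalBasis ℝ W
  let v : Fin k → EuclideanSpace ℝ (Fin k) := fun i => if h : i.1 < r then (c ⟨i.1, h⟩ : W) else 0
  let S : Set (Fin k) := {i | i.1 < r}
  have hrk : r ≤ k := by
    have := Submodule.finrank_le W
    simpa using this
  have hv : Orthonormal ℝ (S.domRestrict v) := by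
    have h1 : Orthonormal ℝ (fun i : Fin r => ((c i : W) : EuclideanSpace ℝ (Fin k))) :=
      c.orthonormal.comp_linearIsometry W.subtypeₗᵢ
    have h2 := h1.comp (fun i : S => (⟨i.1.1, i.2⟩ : Fin r)) (by
      intro i j hij
      simp only [Fin.mk.injEq] at hij
      exact Subtype.ext (Fin.ext hij))
    convert h2 using 1
    funext i
    have : i.1.1 < r := i.2
    simp [v, this]
  obtain ⟨b, hb⟩ := hv.exists_orthonormalBasis_extension_of_card_eq (by simp)
  refine ⟨b, fun i hi w hw => ?_⟩
  have h3 : (⟨w, hw⟩ : W) = ∑ j, inner ℝ (c j) (⟨w, hw⟩ : W) • c j := (c.sum_repr' _).symm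
  have h4 : w = ∑ j, inner ℝ (c j) (⟨w, hw⟩ : W) • ((c j : W) : EuclideanSpace ℝ (Fin k)) := by
    have := congrArg (Submodule.subtype W) h3
    simpa using this
  rw [h4, inner_sum]
  refine Finset.sum_eq_zero fun j _ => ?_
  have hj : b ⟨j.1, j.2.trans_le hrk⟩ = (c j : W) := by
    rw [hb _ (show j.1 < r from j.2)]
    have hjr : j.1 < r := j.2
    simp [v, hjr]
  rw [inner_smul_right, ← hj, b.orthonormal.2, mul_zero]
  intro h
  have := congrArg Fin.val h
  have := j.2
  simp at *
  omega

lemma wg_det_bound_s2 {k m : ℕ} (hmk : m ≤ k) (g : Fin k → EuclideanSpace ℝ (Fin k))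
    (W : Submodule ℝ (EuclideanSpace ℝ (Fin k))) (hW : Module.finrank ℝ W ≤ m)
    (t a d : ℝ) (ht : 0 ≤ t) (ha : ∀ j, ‖g j‖ ≤ a) (hd : ∀ j, ∃ w ∈ W, ‖g j - w‖ ≤ d) :
    t ^ (k - m) * |(Matrix.of fun i j => g j i).det| ≤ Real.sqrt (a ^ 2 + t ^ 2 * d ^ 2) ^ k := by
  classical
  obtain ⟨b, hb⟩ := wg_adapted W hW
  let D : Fin k → ℝ := fun i => if i.1 < m then 1 else t
  let h : Fin k → EuclideanSpace ℝ (Fin k) := fun j => ∑ i, (D i * inner ℝ (b i) (g j)) • b i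
  have hin : ∀ i j, b.repr (h j) i = D i * inner ℝ (b i) (g j) := by
    intro i j
    rw [b.repr_apply_apply]
    simp only [h]
    rw [b.orthonormal.inner_right_fintype]
  have hnorm : ∀ j, ‖h j‖ ≤ Real.sqrt (a ^ 2 + t ^ 2 * d ^ 2) := by
    intro j
    apply Real.le_sqrt_of_sq_le
    obtain ⟨w, hw, hwd⟩ := hd j
    have e1 : ‖h j‖ ^ 2 = ∑ i, (D i * inner ℝ (b i) (g j)) ^ 2 := by
      rw [← b.repr.norm_map, EuclideanSpace.norm_sq_eq]
      simp only [hin, Real.norm_eq_abs, sq_abs]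
    have e2 : ∀ x : EuclideanSpace ℝ (Fin k), ∑ i, (inner ℝ (b i) x) ^ 2 = ‖x‖ ^ 2 := by
      intro x
      rw [← b.repr.norm_map, EuclideanSpace.norm_sq_eq]
      simp [b.repr_apply_apply]
    have e3 : ∑ i, (D i * inner ℝ (b i) (g j)) ^ 2 ≤
        ∑ i, ((inner ℝ (b i) (g j)) ^ 2 + t ^ 2 * (inner ℝ (b i) (g j - w)) ^ 2) := by
      refine Finset.sum_le_sum fun i _ => ?_
      by_cases hi : i.1 < m
      · simp only [D, hi, if_true, one_mul]
        have : 0 ≤ t ^ 2 * (inner ℝ (b i) (g j - w)) ^ 2 := by positivity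
        linarith
      · simp only [D, hi, if_false]
        rw [inner_sub_right, hb i (not_lt.mp hi) w hw, sub_zero, mul_pow]
        have := sq_nonneg (inner ℝ (b i) (g j))
        linarith
    rw [Finset.sum_add_distrib, ← Finset.mul_sum, e2, e2] at e3
    rw [e1]
    refine e3.trans ?_
    have := ha j
    gcongr
  have hdet : b.toBasis.det h = (∏ i, D i) * b.toBasis.det g := by
    rw [Module.Basis.det_apply, Module.Basis.det_apply, ← Matrix.det_mul_column]
    congr 1
    ext i j
    simp only [Module.Basis.toMatrix_apply, Matrix.of_apply, OrthonormalBasis.coe_toBasis_repr_apply]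
    rw [hin, b.repr_apply_apply]
  have hD : ∏ i, D i = t ^ (k - m) := by
    simp only [D]
    rw [Fin.prod_univ_eq_prod_range (fun i => if i < m then (1:ℝ) else t) k,
      ← Finset.prod_range_mul_prod_Ico _ hmk]
    have p1 : ∏ i ∈ Finset.range m, (if i < m then (1:ℝ) else t) = 1 :=
      Finset.prod_eq_one fun i hi => if_pos (Finset.mem_range.mp hi)
    have p2 : ∏ i ∈ Finset.Ico m k, (if i < m then (1:ℝ) else t) = ∏ _i ∈ Finset.Ico m k, t :=
      Finset.prod_congr rfl fun i hi => if_neg (not_lt.mpr (Finset.mem_Ico.mp hi).1)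
    rw [p1, p2]
    simp
  have hG : |(Matrix.of fun i j => g j i).det| = |b.toBasis.det g| := by
    let e := EuclideanSpace.basisFun (Fin k) ℝ
    have : Fact (Module.finrank ℝ (EuclideanSpace ℝ (Fin k)) = k) := ⟨by simp⟩
    rw [← (b.toBasis.orientation).volumeForm_robust' b g,
      (b.toBasis.orientation).volumeForm_robust' e g, Module.Basis.det_apply]
    congr 2
  have hh := wg_hadamard b h
  rw [hdet, hD, abs_mul, abs_of_nonneg (pow_nonneg ht _), ← hG] at hh
  refine hh.trans ?_
  calc ∏ i, ‖h i‖ ≤ ∏ _i : Fin k, Real.sqrt (a ^ 2 + t ^ 2 * d ^ 2) :=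
        Finset.prod_le_prod (fun _ _ => norm_nonneg _) fun i _ => hnorm i
    _ = _ := by simp

section
variable {V : Type*} [NormedAddCommGroup V] [InnerProductSpace ℝ V]

lemma wg_infDist_le_norm (x : V) (E : Submodule ℝ V) : Metric.infDist x (E : Set V) ≤ ‖x‖ := by
  simpa using Metric.infDist_le_dist_of_mem (x := x) E.zero_mem

lemma wg_le_sup {K : Set V} (hK : IsCompact K) (E : Submodule ℝ V) {x : V} (hx : x ∈ K) :
    Metric.infDist x (E : Set V) ≤ ⨆ y ∈ K, Metric.infDist y (E : Set V) := by
  obtain ⟨R, hR⟩ := hK.isBounded.exists_norm_le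
  have hR0 : 0 ≤ R := (norm_nonneg x).trans (hR x hx)
  have hb : BddAbove (Set.range fun y : V => ⨆ (_ : y ∈ K), Metric.infDist y (E : Set V)) := by
    refine ⟨R, ?_⟩
    rintro _ ⟨y, rfl⟩
    exact Real.iSup_le (fun hy => (wg_infDist_le_norm y E).trans (hR y hy)) hR0
  refine le_trans ?_ (le_ciSup hb x)
  simp [hx]

lemma wg_sup_le {K : Set V} (E : Submodule ℝ V) {c : ℝ} (hc : 0 ≤ c)
    (h : ∀ x ∈ K, Metric.infDist x (E : Set V) ≤ c) :
    ⨆ y ∈ K, Metric.infDist y (E : Set V) ≤ c :=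
  Real.iSup_le (fun y => Real.iSup_le (fun hy => h y hy) hc) hc

lemma wg_sup_nonneg (K : Set V) (E : Submodule ℝ V) :
    0 ≤ ⨆ y ∈ K, Metric.infDist y (E : Set V) :=
  Real.iSup_nonneg fun _ => Real.iSup_nonneg fun _ => Metric.infDist_nonneg

lemma wg_err_nonneg (u : ℕ → V) (K : Set V) (n : ℕ) : 0 ≤ greedyErr u K n := wg_sup_nonneg K _

lemma wg_err_anti {u : ℕ → V} {K : Set V} (hK : IsCompact K) {m n : ℕ} (h : m ≤ n) :
    greedyErr u K n ≤ greedyErr u K m := by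
  refine wg_sup_le _ (wg_err_nonneg _ _ _) fun x hx => ?_
  refine le_trans ?_ (wg_le_sup hK _ hx)
  refine Metric.infDist_le_infDist_of_subset ?_ ⟨0, Submodule.zero_mem _⟩
  exact Submodule.span_mono (Set.image_mono (Set.Iio_subset_Iio h))

lemma wg_err_zero {u : ℕ → V} {K : Set V} : greedyErr u K 0 ≤ kolWidth K 0 := by
  have : Nonempty {E : Submodule ℝ V // Module.rank ℝ E ≤ ((0:ℕ) : Cardinal)} := ⟨⟨⊥, by simp⟩⟩
  refine le_ciInf fun E => ?_
  have hE : E.1 = ⊥ := by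
    have := E.2
    simp only [Nat.cast_zero, nonpos_iff_eq_zero] at this
    exact Submodule.rank_eq_zero.mp this
  have h0 : Submodule.span ℝ (u '' Set.Iio 0) = ⊥ := by simp
  rw [greedyErr, hE, h0]

lemma wg_exists_space {K : Set V} (hK : IsCompact K) {m : ℕ} {d : ℝ} (h : kolWidth K m < d) :
    ∃ E : Submodule ℝ V, Module.rank ℝ E ≤ (m : Cardinal) ∧ ∀ x ∈ K, ∃ w ∈ E, ‖x - w‖ ≤ d := by
  have : Nonempty {E : Submodule ℝ V // Module.rank ℝ E ≤ (m : Cardinal)} := ⟨⟨⊥, by simp⟩⟩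
  obtain ⟨E, hE⟩ := exists_lt_of_ciInf_lt h
  refine ⟨E.1, E.2, fun x hx => ?_⟩
  have := (wg_le_sup hK E.1 hx).trans_lt hE
  obtain ⟨w, hw, hwd⟩ := (Metric.infDist_lt_iff ⟨0, E.1.zero_mem⟩).mp this
  exact ⟨w, hw, by rw [← dist_eq_norm]; exact hwd.le⟩

open InnerProductSpace in
lemma wg_infDist_le_gs (u : ℕ → V) (n : ℕ) :
    Metric.infDist (u n) (Submodule.span ℝ (u '' Set.Iio n) : Set V) ≤ ‖gramSchmidt ℝ u n‖ := by
  have hmem : u n - gramSchmidt ℝ u n ∈ Submodule.span ℝ (u '' Set.Iio n) := by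
    rw [gramSchmidt_def, sub_sub_cancel, ← span_gramSchmidt_Iio]
    refine Submodule.sum_mem _ fun i hi => ?_
    have h1 := Submodule.coe_mem ((Submodule.span ℝ {gramSchmidt ℝ u i}).orthogonalProjectionOnto (u n))
    refine Submodule.span_mono ?_ h1
    rw [Set.singleton_subset_iff]
    exact ⟨i, by simpa using hi, rfl⟩
  have := Metric.infDist_le_dist_of_mem (x := u n) hmem
  simpa [dist_eq_norm] using this

open InnerProductSpace in
lemma wg_gs_inner (u : ℕ → V) (n : ℕ) :
    inner ℝ (gramSchmidt ℝ u n) (u n) = ‖gramSchmidt ℝ u n‖ ^ 2 := by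
  conv_lhs => rw [gramSchmidt_def'' ℝ u n]
  rw [inner_add_right, inner_sum, real_inner_self_eq_norm_sq, Finset.sum_eq_zero, add_zero]
  intro i hi
  rw [inner_smul_right, gramSchmidt_orthogonal ℝ u (by simp at hi; omega), mul_zero]

open InnerProductSpace in
lemma wg_key_s2 {K : Set V} (hK : IsCompact K) {u : ℕ → V} (hu : ∀ n, u n ∈ K) {γ : ℝ} (hγ : 0 < γ)
    (hg : IsWeakGreedy u K γ) {m : ℕ} (hm : 1 ≤ m) (N : ℕ) {d : ℝ} (hd0 : 0 < d)
    (hd : kolWidth K m < d) :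
    (γ * greedyErr u K (N + 2 * m)) ^ 2 ≤ 2 * greedyErr u K N * d := by
  classical
  set a := greedyErr u K N with ha
  set σ := greedyErr u K (N + 2 * m) with hσ
  have ha0 : 0 ≤ a := wg_err_nonneg _ _ _
  rcases (wg_err_nonneg u K (N + 2 * m)).eq_or_lt with h0 | hpos
  · rw [hσ, ← h0]; simp; positivity
  have hapos : 0 < a := hpos.trans_le (wg_err_anti hK (by omega))
  obtain ⟨E, hE, hEd⟩ := wg_exists_space hK hd
  have hgs : ∀ i : Fin (2 * m), γ * σ ≤ ‖gramSchmidt ℝ u (N + i)‖ := fun i =>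
    (mul_le_mul_of_nonneg_left (wg_err_anti hK (by omega)) hγ.le).trans
      ((hg _).trans (wg_infDist_le_gs u _))
  have hgpos : ∀ i : Fin (2 * m), 0 < ‖gramSchmidt ℝ u (N + i)‖ := fun i =>
    (mul_pos hγ hpos).trans_le (hgs i)
  let e : Fin (2 * m) → V := fun i => (‖gramSchmidt ℝ u (N + i)‖⁻¹) • gramSchmidt ℝ u (N + i)
  have he : Orthonormal ℝ e := by
    refine ⟨fun i => ?_, fun i j hij => ?_⟩
    · simp only [e]
      rw [norm_smul, norm_inv, norm_norm, inv_mul_cancel₀ (hgpos i).ne']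
    · simp only [e]
      rw [inner_smul_left, inner_smul_right, gramSchmidt_orthogonal ℝ u (by
        intro h; exact hij (Fin.ext (by omega)))]
      simp
  have hlow : ∀ (i : Fin (2 * m)) (j : ℕ), j < N + i → inner ℝ (e i) (u j) = 0 := by
    intro i j hj
    simp only [e]
    rw [inner_smul_left, gramSchmidt_inv_triangular ℝ u hj, mul_zero]
  let Φ : V →ₗ[ℝ] EuclideanSpace ℝ (Fin (2 * m)) :=
    { toFun := fun x => WithLp.toLp 2 fun i => inner ℝ (e i) x
      map_add' := fun x y => by ext i; simp [inner_add_right]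
      map_smul' := fun c x => by ext i; simp [inner_smul_right] }
  have hΦi : ∀ x i, Φ x i = inner ℝ (e i) x := fun x i => rfl
  have hΦ : ∀ x, ‖Φ x‖ ≤ ‖x‖ := by
    intro x
    refine le_of_sq_le_sq ?_ (norm_nonneg _)
    rw [EuclideanSpace.norm_sq_eq]
    exact he.sum_inner_products_le x (s := Finset.univ)
  let g : Fin (2 * m) → EuclideanSpace ℝ (Fin (2 * m)) := fun j => Φ (u (N + j))
  have hga : ∀ j, ‖g j‖ ≤ a := by
    intro j
    refine le_trans ?_ (wg_le_sup hK (Submodule.span ℝ (u '' Set.Iio N)) (hu (N + j)))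
    rw [Metric.le_infDist ⟨0, Submodule.zero_mem _⟩]
    intro y hy
    have hy0 : Φ y = 0 := by
      have : Submodule.span ℝ (u '' Set.Iio N) ≤ LinearMap.ker Φ := by
        rw [Submodule.span_le]
        rintro _ ⟨l, hl, rfl⟩
        rw [SetLike.mem_coe, LinearMap.mem_ker]
        ext i
        rw [hΦi, hlow i l (by simp at hl; omega)]
        rfl
      exact this hy
    have : g j = Φ (u (N + j) - y) := by simp [g, hy0]
    rw [this, dist_eq_norm]
    exact hΦ _
  have hfin : Module.Finite ℝ E := by
    rw [← Module.rank_lt_aleph0_iff]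
    exact hE.trans_lt Cardinal.natCast_lt_aleph0
  have hW : Module.finrank ℝ (E.map Φ) ≤ m :=
    (Submodule.finrank_map_le Φ E).trans (Module.finrank_le_of_rank_le hE)
  have hgd : ∀ j, ∃ w ∈ E.map Φ, ‖g j - w‖ ≤ d := by
    intro j
    obtain ⟨w, hw, hwd⟩ := hEd _ (hu (N + j))
    refine ⟨Φ w, Submodule.mem_map_of_mem hw, ?_⟩
    simp only [g]
    rw [← map_sub]
    exact (hΦ _).trans hwd
  have hB := wg_det_bound_s2 (by omega : m ≤ 2 * m) g (E.map Φ) hW (a / d) a d (by positivity) hga hgd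
  have hdet : (Matrix.of fun i j => g j i).det = ∏ i : Fin (2 * m), ‖gramSchmidt ℝ u (N + i)‖ := by
    rw [Matrix.det_of_upperTriangular]
    · refine Finset.prod_congr rfl fun i _ => ?_
      simp only [Matrix.of_apply, g, hΦi, e]
      rw [inner_smul_left, wg_gs_inner]
      have := (hgpos i).ne'
      simp
      field_simp
    · intro i j hij
      simp only [Matrix.of_apply, g, hΦi]
      exact hlow i _ (by simp at hij; omega)
  have hlb : ((γ * σ) ^ 2) ^ m ≤ |(Matrix.of fun i j => g j i).det| := by
    rw [hdet, ← pow_mul]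
    refine le_trans ?_ (le_abs_self _)
    calc (γ * σ) ^ (2 * m) = ∏ _i : Fin (2 * m), (γ * σ) := by simp
      _ ≤ _ := Finset.prod_le_prod (fun _ _ => by positivity) fun i _ => hgs i
  have e1 : a ^ 2 + (a / d) ^ 2 * d ^ 2 = 2 * a ^ 2 := by field_simp; ring
  rw [e1, pow_mul, Real.sq_sqrt (by positivity), show 2 * m - m = m by omega] at hB
  have h1 : (a / d * (γ * σ) ^ 2) ^ m ≤ (2 * a ^ 2) ^ m := by
    rw [mul_pow]
    exact (mul_le_mul_of_nonneg_left hlb (by positivity)).trans hB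
  have h2 := le_of_pow_le_pow_left₀ (by omega) (by positivity) h1
  rw [div_mul_eq_mul_div, div_le_iff₀ hd0] at h2
  refine le_of_mul_le_mul_left ?_ hapos
  linarith

end

theorem statement2 (s γ : ℝ) (hs : 0 < s) (hγ : γ ∈ Set.Ioc (0 : ℝ) 1) :
    ∃ C : ℝ, 0 < C ∧
      ∀ (V : Type u) [NormedAddCommGroup V] [InnerProductSpace ℝ V] [CompleteSpace V]
        (K : Set V), IsCompact K →
        ∀ (nstar : ℕ) (C0 : ℝ), 0 < C0 →
        ∀ u : ℕ → V, (∀ n, u n ∈ K) → IsWeakGreedy u K γ →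
        (∀ n : ℕ, n ≤ nstar → kolWidth K n ≤ C0 * (max 1 (n : ℝ)) ^ (-s)) →
        ∀ n : ℕ, n ≤ nstar → greedyErr u K n ≤ C * C0 * (max 1 (n : ℝ)) ^ (-s) := by
  obtain ⟨hγ0, hγ1⟩ := hγ
  -- `p = 2^s`
  obtain ⟨p, hp⟩ : ∃ p : ℝ, p = (2:ℝ) ^ s := ⟨_, rfl⟩
  have hp1 : 1 ≤ p := hp ▸ Real.one_le_rpow (by norm_num) hs.le
  have hp0 : 0 < p := by linarith
  have hpow : ∀ j : ℕ, (max 1 ((2 ^ j : ℕ) : ℝ)) ^ (-s) = (p ^ j)⁻¹ := by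
    intro j
    have : (1:ℝ) ≤ ((2 ^ j : ℕ) : ℝ) := by exact_mod_cast Nat.one_le_two_pow
    rw [max_eq_right this, Real.rpow_neg (by positivity), hp]
    push_cast
    rw [← Real.rpow_natCast, ← Real.rpow_natCast, ← Real.rpow_mul (by norm_num),
      ← Real.rpow_mul (by norm_num), mul_comm]
  set A : ℝ := 4 * p ^ 3 / γ ^ 2 with hA
  have hA0 : 0 < A := by positivity
  have hAp : p ≤ A := by
    rw [hA, le_div_iff₀ (by positivity)]
    have h1 : γ ^ 2 ≤ 1 := pow_le_one₀ hγ0.le hγ1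
    have h2 : p ≤ p ^ 3 := le_self_pow₀ hp1 (by norm_num)
    nlinarith
  refine ⟨A * p, by positivity, ?_⟩
  intro V _ _ _ K hK nstar C0 hC0 u hu hg hw
  have hz : greedyErr u K 0 ≤ C0 := by
    have := (wg_err_zero (u := u)).trans (hw 0 (Nat.zero_le _))
    simpa using this
  have hle : ∀ n, greedyErr u K n ≤ C0 := fun n => (wg_err_anti hK (Nat.zero_le n)).trans hz
  have main : ∀ j : ℕ, 2 ^ j ≤ nstar → greedyErr u K (2 ^ j) ≤ A * C0 * (p ^ j)⁻¹ := by
    intro j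
    induction j with
    | zero =>
      intro _
      refine (hle _).trans ?_
      simp
      nlinarith
    | succ j ih =>
      intro hj
      rcases j with _ | j
      · refine (hle _).trans ?_
        rw [zero_add, pow_one, ← div_eq_mul_inv, le_div_iff₀ hp0]
        nlinarith
      · have h1 := ih (le_trans (Nat.pow_le_pow_right (by norm_num) (by omega)) hj)
        have h2 := hw (2 ^ j) (le_trans (Nat.pow_le_pow_right (by norm_num) (by omega)) hj)
        rw [hpow] at h2
        have hq : 0 < C0 * (p ^ j)⁻¹ := by positivity
        have h3 := wg_key_s2 hK hu hγ0 hg (m := 2 ^ j) Nat.one_le_two_pow (2 ^ (j + 1))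
          (d := 2 * (C0 * (p ^ j)⁻¹)) (by positivity) (by linarith)
        rw [show 2 ^ (j + 1) + 2 * 2 ^ j = 2 ^ (j + 1 + 1) by ring] at h3
        refine le_of_sq_le_sq ?_ (by positivity)
        have h4 : (γ * greedyErr u K (2 ^ (j + 1 + 1))) ^ 2 ≤
            2 * (A * C0 * (p ^ (j + 1))⁻¹) * (2 * (C0 * (p ^ j)⁻¹)) := by
          refine h3.trans ?_
          gcongr
        have h5 : 2 * (A * C0 * (p ^ (j + 1))⁻¹) * (2 * (C0 * (p ^ j)⁻¹)) =
            γ ^ 2 * (A * C0 * (p ^ (j + 1 + 1))⁻¹) ^ 2 := by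
          rw [hA]
          field_simp
          ring
        rw [h5, mul_pow] at h4
        exact le_of_mul_le_mul_left h4 (by positivity)
  intro n hn
  rcases Nat.eq_zero_or_pos n with rfl | hn0
  · refine hz.trans ?_
    simp
    nlinarith [mul_le_mul hAp hp1 zero_le_one hA0.le]
  · have hj1 : 2 ^ Nat.log 2 n ≤ n := Nat.pow_log_le_self 2 hn0.ne'
    have hj2 : n < 2 ^ (Nat.log 2 n + 1) := Nat.lt_pow_succ_log_self (by norm_num) n
    refine (wg_err_anti hK hj1).trans ((main _ (hj1.trans hn)).trans ?_)
    have h6 : (p ^ (Nat.log 2 n + 1))⁻¹ ≤ (max 1 (n:ℝ)) ^ (-s) := by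
      rw [← hpow]
      refine Real.rpow_le_rpow_of_nonpos (by positivity) ?_ (by linarith)
      exact max_le_max le_rfl (by exact_mod_cast hj2.le)
    calc A * C0 * (p ^ Nat.log 2 n)⁻¹ = A * p * C0 * (p ^ (Nat.log 2 n + 1))⁻¹ := by
          rw [pow_succ]; field_simp
      _ ≤ _ := by gcongr
end

section
/- Let V be a real Hilbert space, Λ ⊂ ℕ^d a downward closed set of cardinality m ≥ 1, and P ∈ P_Λ a V-valued polynomial. Then sup_{y∈Y} ‖P(y)‖ ≤ m·(∫_Y ‖P(y)‖² dρ(y))^{1/2}, where Y = [−1,1]^d and ρ is the uniform probability measure on Y. -/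
open MeasureTheory

/-- The parameter cube `Y = [-1,1]^d`. -/
def cube (d : ℕ) : Set (Fin d → ℝ) := Set.univ.pi fun _ => Set.Icc (-1 : ℝ) 1

/-- A finite set `Λ ⊂ ℕ^d` is downward closed if `ν ∈ Λ` and `μ ≤ ν` (componentwise)
imply `μ ∈ Λ`. -/
def DownwardClosed {d : ℕ} (Λ : Finset (Fin d → ℕ)) : Prop :=
  ∀ ν ∈ Λ, ∀ μ : Fin d → ℕ, μ ≤ ν → μ ∈ Λ

/-- The `V`-valued polynomial `y ↦ ∑_{ν ∈ Λ} y^ν • a_ν`, with `y^ν = ∏_j y_j^{ν_j}`. -/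
noncomputable def polyEval {d : ℕ} {V : Type*} [AddCommGroup V] [Module ℝ V]
    (Λ : Finset (Fin d → ℕ)) (a : (Fin d → ℕ) → V) (y : Fin d → ℝ) : V :=
  ∑ ν ∈ Λ, (∏ j, y j ^ ν j) • a ν

/-- `δ_m(v)`: the error of best uniform approximation of `v` on `Y = [-1,1]^d`
by `V`-valued polynomials supported on a downward closed index set of cardinality `m`. -/
noncomputable def deltaApprox {d : ℕ} {V : Type*} [NormedAddCommGroup V] [Module ℝ V]
    (v : (Fin d → ℝ) → V) (m : ℕ) : ℝ :=
  sInf { e | ∃ (Λ : Finset (Fin d → ℕ)) (a : (Fin d → ℕ) → V),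
    DownwardClosed Λ ∧ Λ.card = m ∧ e = ⨆ y ∈ cube d, ‖v y - polyEval Λ a y‖ }

/-- Membership in the approximation class `A^r`: `δ_m(v) ≤ C m^{-r}` for all `m ≥ 1`. -/
def MemA {d : ℕ} {V : Type*} [NormedAddCommGroup V] [Module ℝ V]
    (r : ℝ) (v : (Fin d → ℝ) → V) : Prop :=
  ∃ C : ℝ, 0 ≤ C ∧ ∀ m : ℕ, 1 ≤ m → deltaApprox v m ≤ C * (m : ℝ) ^ (-r)

/-- The seminorm `|v|_{A^r}`: the smallest constant `C ≥ 0` with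
`δ_m(v) ≤ C m^{-r}` for all `m ≥ 1`. -/
noncomputable def semiA {d : ℕ} {V : Type*} [NormedAddCommGroup V] [Module ℝ V]
    (r : ℝ) (v : (Fin d → ℝ) → V) : ℝ :=
  sInf { C | 0 ≤ C ∧ ∀ m : ℕ, 1 ≤ m → deltaApprox v m ≤ C * (m : ℝ) ^ (-r) }

/-- The norm `‖v‖_{A^r} = max{‖v‖_{L^∞(Y,V)}, |v|_{A^r}}`. -/
noncomputable def normA {d : ℕ} {V : Type*} [NormedAddCommGroup V] [Module ℝ V]
    (r : ℝ) (v : (Fin d → ℝ) → V) : ℝ :=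
  max (⨆ y ∈ cube d, ‖v y‖) (semiA r v)

/-- The uniform probability measure on the cube `Y = [-1,1]^d`. -/
noncomputable def uniformCube (d : ℕ) : Measure (Fin d → ℝ) :=
  Measure.pi fun _ => (2 : ENNReal)⁻¹ • (volume.restrict (Set.Icc (-1 : ℝ) 1))


open Polynomial

noncomputable def leg : ℕ → ℝ[X]
  | 0 => 1
  | 1 => X
  | (n+2) => C ((2*n+3)/(n+2) : ℝ) * X * leg (n+1) - C ((n+1)/(n+2) : ℝ) * leg n

lemma leg_rec (n : ℕ) : (n+2 : ℝ[X]) * leg (n+2) = (2*(n:ℝ[X])+3) * X * leg (n+1) - ((n:ℝ[X])+1) * leg n := by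
  have h : (n+2 : ℝ) ≠ 0 := by positivity
  have h1 : (n+2 : ℝ[X]) = C (n+2 : ℝ) := by simp only [map_add, map_natCast, map_ofNat]
  have e1 : (n+2 : ℝ[X]) * C ((2*n+3)/(n+2) : ℝ) = 2*n+3 := by
    rw [h1, ← C_mul, mul_div_cancel₀ _ h]; simp only [map_mul, map_add, map_natCast, map_ofNat, map_one]
  have e2 : (n+2 : ℝ[X]) * C ((n+1)/(n+2) : ℝ) = n+1 := by
    rw [h1, ← C_mul, mul_div_cancel₀ _ h]; simp only [map_mul, map_add, map_natCast, map_ofNat, map_one]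
  rw [leg]
  linear_combination (X * leg (n+1)) * e1 - leg n * e2

lemma leg_AB (n : ℕ) : derivative (leg (n+1)) = X * derivative (leg n) + ((n:ℝ[X])+1) * leg n ∧
    X * derivative (leg (n+1)) - derivative (leg n) = ((n:ℝ[X])+1) * leg (n+1) := by
  induction n with
  | zero => simp [leg]
  | succ n ih =>
    obtain ⟨A, B⟩ := ih
    have h0 : (n+2 : ℝ[X]) ≠ 0 := by
      have : (n+2 : ℝ[X]) = ((n+2 : ℕ) : ℝ[X]) := by push_cast; ring
      rw [this]; exact Nat.cast_ne_zero.2 (by omega)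
    have hr := leg_rec n
    have hd := congrArg derivative hr
    simp only [derivative_mul, derivative_add, derivative_sub, derivative_natCast, derivative_X,
      derivative_one, derivative_ofNat] at hd
    have A' : derivative (leg (n+2)) = X * derivative (leg (n+1)) + ((n:ℝ[X])+2) * leg (n+1) := by
      apply mul_left_cancel₀ h0
      linear_combination hd + (n+1) * B
    refine ⟨?_, ?_⟩
    · push_cast; rw [A']; ring
    · push_cast
      rw [show n+1+1 = n+2 from rfl, A']
      linear_combination X * B - A - hr

lemma leg_ode (n : ℕ) : derivative ((1 - X^2) * derivative (leg n)) = - ((n:ℝ[X])*((n:ℝ[X])+1)) * leg n := by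
  cases n with
  | zero => simp [leg]
  | succ n =>
    obtain ⟨A, B⟩ := leg_AB n
    have D : (1 - X^2) * derivative (leg (n+1)) = - (((n:ℝ[X])+1) * (X * leg (n+1) - leg n)) := by
      linear_combination A - X * B
    rw [D]
    simp only [derivative_mul, derivative_add, derivative_sub, derivative_natCast, derivative_X,
      derivative_one, derivative_neg]
    push_cast
    linear_combination -(n+1)*B

lemma leg_one (n : ℕ) : (leg n).eval 1 = 1 ∧ (leg (n+1)).eval 1 = 1 := by
  induction n with
  | zero => simp [leg]
  | succ n ih =>
    refine ⟨ih.2, ?_⟩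
    rw [leg]; simp [ih.1, ih.2]; field_simp; ring

lemma leg_neg_one (n : ℕ) : (leg n).eval (-1) = (-1)^n ∧ (leg (n+1)).eval (-1) = (-1)^(n+1) := by
  induction n with
  | zero => simp [leg]
  | succ n ih =>
    refine ⟨ih.2, ?_⟩
    rw [leg]; simp [ih.1, ih.2]; field_simp; ring

lemma leg_bound (n : ℕ) (x : ℝ) (hx : x ∈ Set.Icc (-1:ℝ) 1) : |(leg n).eval x| ≤ 1 := by
  rcases Nat.eq_zero_or_pos n with rfl | hn
  · simp [leg]
  have hN : (0:ℝ) < n * (n+1) := by positivity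
  set P := leg n with hP
  set F : ℝ[X] := C ((n:ℝ)*(n+1)) * P^2 + (1 - X^2) * derivative P ^ 2 with hF
  have hode := leg_ode n
  rw [← hP] at hode
  have hF' : derivative F = 2 * X * derivative P ^ 2 := by
    simp only [hF, pow_two, derivative_mul, derivative_add, derivative_sub, derivative_X,
      derivative_one, derivative_C, map_mul, map_add, map_natCast, map_one] at hode ⊢
    have e : (derivative (n : ℝ[X])) = 0 := derivative_natCast
    linear_combination 2 * derivative P * hode + P * P * (2*n + 1) * e
  have key : P.eval x ^ 2 ≤ 1 := by
    have hFx : F.eval x ≤ n * (n+1) := by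
      rcases le_total 0 x with h | h
      · have hm : MonotoneOn (fun t => F.eval t) (Set.Icc 0 1) := by
          apply monotoneOn_of_deriv_nonneg (convex_Icc 0 1) F.continuous.continuousOn
            F.differentiable.differentiableOn
          intro t ht
          rw [interior_Icc] at ht
          rw [Polynomial.deriv, hF']
          simp only [eval_mul, eval_pow, eval_X, eval_ofNat]
          have := ht.1
          positivity
        have := hm ⟨h, hx.2⟩ ⟨zero_le_one, le_rfl⟩ hx.2
        simpa [hF, hP, (leg_one n).1] using this
      · have hm : AntitoneOn (fun t => F.eval t) (Set.Icc (-1) 0) := by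
          apply antitoneOn_of_deriv_nonpos (convex_Icc (-1) 0) F.continuous.continuousOn
            F.differentiable.differentiableOn
          intro t ht
          rw [interior_Icc] at ht
          rw [Polynomial.deriv, hF']
          simp only [eval_mul, eval_pow, eval_X, eval_ofNat]
          have := ht.2
          nlinarith [sq_nonneg ((derivative P).eval t)]
        have := hm ⟨le_rfl, by norm_num⟩ ⟨hx.1, h⟩ hx.1
        simpa [hF, hP, (leg_neg_one n).1, ← pow_mul, mul_comm n 2] using this
    have h2 : 0 ≤ (1 - x^2) * (derivative P).eval x ^ 2 := by
      apply mul_nonneg _ (sq_nonneg _)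
      nlinarith [hx.1, hx.2]
    have h3 : F.eval x = n*(n+1) * P.eval x ^ 2 + (1 - x^2) * (derivative P).eval x ^ 2 := by
      simp [hF]
    by_contra hc
    push Not at hc
    nlinarith
  exact abs_le_one_iff_mul_self_le_one.2 (by nlinarith)

noncomputable def I2 (p : ℝ[X]) : ℝ := ∫ x in (-1:ℝ)..1, p.eval x

lemma I2_add (p q : ℝ[X]) : I2 (p+q) = I2 p + I2 q := by
  simp only [I2, eval_add]
  exact intervalIntegral.integral_add (p.continuous.intervalIntegrable _ _) (q.continuous.intervalIntegrable _ _)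
lemma I2_C (c : ℝ) (q : ℝ[X]) : I2 (C c * q) = c * I2 q := by
  simp only [I2, eval_mul, eval_C]
  exact intervalIntegral.integral_const_mul _ _
lemma I2_der (p : ℝ[X]) : I2 (derivative p) = p.eval 1 - p.eval (-1) := by
  simp only [I2]
  exact intervalIntegral.integral_eq_sub_of_hasDerivAt (fun x _ => p.hasDerivAt x)
    ((derivative p).continuous.intervalIntegrable _ _)

lemma leg_orth {m n : ℕ} (h : m ≠ n) : I2 (leg m * leg n) = 0 := by
  have e : derivative ((1 - X^2) * derivative (leg m) * leg n - (1 - X^2) * derivative (leg n) * leg m)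
      = C ((n:ℝ)*(n+1) - m*(m+1)) * (leg m * leg n) := by
    rw [derivative_sub, derivative_mul, derivative_mul (f := (1 - X^2) * derivative (leg n)),
      leg_ode, leg_ode]
    simp only [map_mul, map_sub, map_add, map_natCast, map_one]
    ring
  have h1 := congrArg I2 e
  rw [I2_der, I2_C] at h1
  simp only [eval_sub, eval_mul, eval_pow, eval_X, eval_one] at h1
  have h2 : ((n:ℝ)*(n+1) - m*(m+1)) ≠ 0 := by
    have : ((n:ℝ)*(n+1) - m*(m+1)) = (n - m) * (n+m+1) := by ring
    rw [this]
    have : (n:ℝ) - m ≠ 0 := sub_ne_zero.2 (by exact_mod_cast h.symm)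
    positivity
  apply (mul_eq_zero.1 (h1.symm.trans (by norm_num))).resolve_left h2

lemma leg_norm (n : ℕ) : (2*n+1) * I2 (leg n * leg n) = 2 := by
  induction n with
  | zero => simp [leg, I2]; norm_num
  | succ n ih =>
    refine Eq.trans ?_ ih
    have r1 : C (2*n+3:ℝ) * (X * leg (n+1) * leg n) = C (n+2:ℝ) * (leg (n+2) * leg n) + C (n+1:ℝ) * (leg n * leg n) := by
      simp only [map_mul, map_add, map_natCast, map_one, map_ofNat]
      linear_combination -leg n * leg_rec n
    have h1 := congrArg I2 r1
    rw [I2_add, I2_C, I2_C, I2_C, leg_orth (by omega)] at h1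
    have h2 : (2*n+1) * I2 (X * leg (n+1) * leg n) = (n+1) * I2 (leg (n+1) * leg (n+1)) := by
      cases n with
      | zero => simp [leg]
      | succ n =>
        have r2 : C (2*n+3:ℝ) * (X * leg (n+2) * leg (n+1)) = C (n+2:ℝ) * (leg (n+2) * leg (n+2)) + C (n+1:ℝ) * (leg n * leg (n+2)) := by
          simp only [map_mul, map_add, map_natCast, map_one, map_ofNat]
          linear_combination -leg (n+2) * leg_rec n
        have h1 := congrArg I2 r2
        rw [I2_add, I2_C, I2_C, I2_C, leg_orth (m := n) (n := n+2) (by omega)] at h1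
        push_cast
        linear_combination h1
    have h3 : (n+1:ℝ) ≠ 0 := by positivity
    apply mul_left_cancel₀ h3
    push_cast
    linear_combination (2*n+1) * h1 - (2*n+3) * h2

lemma X_mul_leg (k : ℕ) : X * leg k ∈ Submodule.span ℝ (leg '' (Finset.range (k+2) : Set ℕ)) := by
  cases k with
  | zero => exact Submodule.subset_span ⟨1, by simp, by simp [leg]⟩
  | succ k =>
    have h : (2*k+3:ℝ) ≠ 0 := by positivity
    have e : X * leg (k+1) = ((k+2:ℝ)/(2*k+3)) • leg (k+2) + ((k+1:ℝ)/(2*k+3)) • leg k := by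
      have h0 : (C (2*k+3:ℝ)) ≠ 0 := by rwa [Ne, C_eq_zero]
      apply mul_left_cancel₀ h0
      rw [mul_add, smul_eq_C_mul, smul_eq_C_mul, ← mul_assoc, ← mul_assoc (C _) (C _), ← mul_assoc (C _) (C _), ← C_mul, ← C_mul, mul_div_cancel₀ _ h, mul_div_cancel₀ _ h]
      simp only [map_mul, map_add, map_natCast, map_one, map_ofNat]
      linear_combination -leg_rec k
    rw [e]
    refine Submodule.add_mem _ (Submodule.smul_mem _ _ (Submodule.subset_span ⟨k+2, by simp, rfl⟩)) (Submodule.smul_mem _ _ (Submodule.subset_span ⟨k, by simp; omega, rfl⟩))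

lemma X_pow_mem (n : ℕ) : (X^n : ℝ[X]) ∈ Submodule.span ℝ (leg '' (Finset.range (n+1) : Set ℕ)) := by
  induction n with
  | zero => exact Submodule.subset_span ⟨0, by simp, by simp [leg]⟩
  | succ n ih =>
    rw [pow_succ']
    generalize (X^n : ℝ[X]) = p at ih
    induction ih using Submodule.span_induction with
    | mem x hx =>
      obtain ⟨k, hk, rfl⟩ := hx
      refine Submodule.span_mono (Set.image_mono ?_) (X_mul_leg k)
      intro j hj
      simp at hk hj ⊢
      omega
    | zero => simp
    | add x y _ _ hx hy => rw [mul_add]; exact Submodule.add_mem _ hx hy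
    | smul c x _ hx => rw [mul_smul_comm]; exact Submodule.smul_mem _ _ hx

lemma pow_expand (n : ℕ) : ∃ c : ℕ → ℝ, ∀ x : ℝ, x^n = ∑ k ∈ Finset.range (n+1), c k * (leg k).eval x := by
  obtain ⟨c, hc⟩ := Submodule.mem_span_image_finset_iff_exists_fun ℝ |>.1 (X_pow_mem n)
  refine ⟨fun k => if h : k ∈ Finset.range (n+1) then c ⟨k, h⟩ else 0, fun x => ?_⟩
  have h := congrArg (eval x) hc
  rw [eval_pow, eval_X, eval_finsetSum] at h
  rw [← h, ← Finset.sum_coe_sort (Finset.range (n+1))]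
  refine Finset.sum_congr rfl fun k _ => ?_
  beta_reduce
  rw [dif_pos k.2, eval_smul, smul_eq_mul]

def maxSet (n : ℕ) : Finset (ℕ × ℕ) :=
  (Finset.range (n+1) ×ˢ {n}) ∪ ({n} ×ˢ Finset.range n)

lemma maxSet_card (n : ℕ) : (maxSet n).card = 2*n+1 := by
  rw [maxSet, Finset.card_union_of_disjoint]
  · simp; ring
  · rw [Finset.disjoint_left]
    rintro ⟨a, b⟩ h1 h2
    simp at h1 h2
    omega

lemma maxSet_max {n : ℕ} {p : ℕ × ℕ} (h : p ∈ maxSet n) : max p.1 p.2 = n := by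
  simp only [maxSet, Finset.mem_union, Finset.mem_product, Finset.mem_range,
    Finset.mem_singleton] at h
  omega

lemma sum_prod_le {d : ℕ} (Λ : Finset (Fin d → ℕ)) (hΛ : DownwardClosed Λ) :
    ∑ ν ∈ Λ, ∏ j, (2 * ν j + 1) ≤ Λ.card ^ 2 := by
  have e : ∑ ν ∈ Λ, ∏ j, (2 * ν j + 1) =
      (Λ.sigma fun ν => Fintype.piFinset fun j => maxSet (ν j)).card := by
    rw [Finset.card_sigma]
    simp [Fintype.card_piFinset, maxSet_card]
  rw [e, pow_two, ← Finset.card_product]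
  apply Finset.card_le_card_of_injOn
    (fun q : (_ : Fin d → ℕ) × (Fin d → ℕ × ℕ) => ((fun j => (q.2 j).1), (fun j => (q.2 j).2)))
  · rintro ⟨ν, q⟩ h
    rw [Finset.mem_coe, Finset.mem_sigma, Fintype.mem_piFinset] at h
    rw [Finset.mem_coe, Finset.mem_product]
    refine ⟨hΛ ν h.1 _ fun j => ?_, hΛ ν h.1 _ fun j => ?_⟩
    · have := maxSet_max (h.2 j); simp only at this ⊢; omega
    · have := maxSet_max (h.2 j); simp only at this ⊢; omega
  · rintro ⟨ν, q⟩ h ⟨ν', q'⟩ h' heq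
    rw [Finset.mem_coe, Finset.mem_sigma, Fintype.mem_piFinset] at h h'
    simp only [Prod.mk.injEq] at heq
    have hq : q = q' := by
      funext j
      exact Prod.ext (congrFun heq.1 j) (congrFun heq.2 j)
    subst hq
    have : ν = ν' := by
      funext j
      exact (maxSet_max (h.2 j)).symm.trans (maxSet_max (h'.2 j))
    subst this
    rfl

noncomputable def mleg {d : ℕ} (μ : Fin d → ℕ) (y : Fin d → ℝ) : ℝ := ∏ j, (leg (μ j)).eval (y j)

lemma polyEval_expand {d : ℕ} {V : Type*} [AddCommGroup V] [Module ℝ V]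
    (Λ : Finset (Fin d → ℕ)) (hΛ : DownwardClosed Λ) (a : (Fin d → ℕ) → V) :
    ∃ b : (Fin d → ℕ) → V, ∀ y, polyEval Λ a y = ∑ μ ∈ Λ, mleg μ y • b μ := by
  classical
  choose c hc using pow_expand
  let K : (Fin d → ℕ) → (Fin d → ℕ) → ℝ := fun ν μ => if μ ≤ ν then ∏ j, c (ν j) (μ j) else 0
  have hK : ∀ ν ∈ Λ, ∀ y : Fin d → ℝ, ∏ j, y j ^ ν j = ∑ μ ∈ Λ, mleg μ y * K ν μ := by
    intro ν hν y
    simp only [hc]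
    rw [Finset.prod_univ_sum]
    have hs : (Fintype.piFinset fun j => Finset.range (ν j + 1)) ⊆ Λ := by
      intro μ hμ
      rw [Fintype.mem_piFinset] at hμ
      exact hΛ ν hν μ fun j => by have := hμ j; simp at this; omega
    rw [← Finset.sum_subset hs (f := fun μ => mleg μ y * K ν μ)]
    · refine Finset.sum_congr rfl fun μ hμ => ?_
      rw [Fintype.mem_piFinset] at hμ
      have : μ ≤ ν := fun j => by have := hμ j; simp at this; omega
      simp only [K, if_pos this, mleg, Finset.prod_mul_distrib]
      ring
    · intro μ _ hμ
      have : ¬ μ ≤ ν := fun h => hμ (by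
        rw [Fintype.mem_piFinset]; intro j; have := h j; simp; omega)
      simp [K, if_neg this]
  refine ⟨fun μ => ∑ ν ∈ Λ, K ν μ • a ν, fun y => ?_⟩
  simp only [polyEval, Finset.smul_sum, smul_smul]
  rw [Finset.sum_comm]
  refine Finset.sum_congr rfl fun ν hν => ?_
  rw [hK ν hν, Finset.sum_smul]

lemma int_one (p : ℝ[X]) :
    ∫ x, p.eval x ∂((2 : ENNReal)⁻¹ • (volume.restrict (Set.Icc (-1 : ℝ) 1))) = I2 p / 2 := by
  rw [integral_smul_measure, integral_Icc_eq_integral_Ioc,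
    ← intervalIntegral.integral_of_le (by norm_num)]
  simp [I2]; ring

lemma integrable_one (p : ℝ[X]) :
    Integrable (fun x => p.eval x) ((2 : ENNReal)⁻¹ • (volume.restrict (Set.Icc (-1 : ℝ) 1))) := by
  apply Integrable.smul_measure _ (by simp)
  exact p.continuous.continuousOn.integrableOn_Icc

instance : IsFiniteMeasure ((2 : ENNReal)⁻¹ • (volume.restrict (Set.Icc (-1 : ℝ) 1))) :=
  Measure.smul_finite _ (by simp)

lemma mleg_mul {d : ℕ} (μ ν : Fin d → ℕ) (y : Fin d → ℝ) :
    mleg μ y * mleg ν y = ∏ j, (leg (μ j) * leg (ν j)).eval (y j) := by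
  simp [mleg, Finset.prod_mul_distrib]

lemma mleg_integrable {d : ℕ} (μ ν : Fin d → ℕ) :
    Integrable (fun y => mleg μ y * mleg ν y) (uniformCube d) := by
  simp only [mleg_mul]
  exact Integrable.fintype_prod (f := fun j x => (leg (μ j) * leg (ν j)).eval x)
    fun j => integrable_one _

lemma mleg_integral {d : ℕ} (μ ν : Fin d → ℕ) :
    ∫ y, mleg μ y * mleg ν y ∂(uniformCube d) =
      if μ = ν then (∏ j, (2 * (μ j : ℝ) + 1))⁻¹ else 0 := by
  simp only [mleg_mul, uniformCube]
  rw [integral_fintype_prod_eq_prod (f := fun j x => (leg (μ j) * leg (ν j)).eval x)]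
  simp only [int_one]
  split_ifs with h
  · subst h
    rw [← Finset.prod_inv_distrib]
    refine Finset.prod_congr rfl fun j _ => ?_
    have := leg_norm (μ j)
    have h2 : (2 * (μ j : ℝ) + 1) ≠ 0 := by positivity
    field_simp
    linear_combination this
  · obtain ⟨j, hj⟩ := Function.ne_iff.1 h
    exact Finset.prod_eq_zero (Finset.mem_univ j) (by rw [leg_orth hj]; simp)

lemma mleg_bound {d : ℕ} (μ : Fin d → ℕ) (y : Fin d → ℝ) (hy : y ∈ cube d) : |mleg μ y| ≤ 1 := by
  rw [mleg, Finset.abs_prod]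
  exact Finset.prod_le_one (fun _ _ => abs_nonneg _)
    fun j _ => leg_bound _ _ (hy j (Set.mem_univ j))

lemma parseval {d : ℕ} {V : Type*} [NormedAddCommGroup V] [InnerProductSpace ℝ V]
    (Λ : Finset (Fin d → ℕ)) (b : (Fin d → ℕ) → V) :
    ∫ y, ‖∑ μ ∈ Λ, mleg μ y • b μ‖ ^ 2 ∂(uniformCube d) =
      ∑ μ ∈ Λ, ‖b μ‖ ^ 2 / ∏ j, (2 * (μ j : ℝ) + 1) := by
  have e : ∀ y, ‖∑ μ ∈ Λ, mleg μ y • b μ‖ ^ 2 =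
      ∑ μ ∈ Λ, ∑ ν ∈ Λ, mleg μ y * mleg ν y * inner ℝ (b μ) (b ν) := by
    intro y
    rw [← real_inner_self_eq_norm_sq, sum_inner]
    refine Finset.sum_congr rfl fun μ _ => ?_
    rw [inner_sum]
    refine Finset.sum_congr rfl fun ν _ => ?_
    rw [real_inner_smul_left, real_inner_smul_right]
    ring
  simp only [e]
  rw [integral_finsetSum _ fun μ _ => integrable_finsetSum _ fun ν _ =>
    (mleg_integrable μ ν).mul_const _]
  refine Finset.sum_congr rfl fun μ hμ => ?_
  rw [integral_finsetSum _ fun ν _ => (mleg_integrable μ ν).mul_const _]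
  simp only [integral_mul_const, mleg_integral, ite_mul, zero_mul]
  rw [Finset.sum_ite_eq, if_pos hμ, real_inner_self_eq_norm_sq]
  ring

theorem statement8 {d : ℕ} (hd : 0 < d) {V : Type*} [NormedAddCommGroup V]
    [InnerProductSpace ℝ V]
    (Λ : Finset (Fin d → ℕ)) (hΛ : DownwardClosed Λ)
    (m : ℕ) (hm : 1 ≤ m) (hcard : Λ.card = m) (a : (Fin d → ℕ) → V) :
    (⨆ y ∈ cube d, ‖polyEval Λ a y‖) ≤
      m * Real.sqrt (∫ y, ‖polyEval Λ a y‖ ^ 2 ∂(uniformCube d)) := by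
  have h0 : 0 ≤ m * Real.sqrt (∫ y, ‖polyEval Λ a y‖ ^ 2 ∂(uniformCube d)) := by positivity
  refine Real.iSup_le (fun y => Real.iSup_le (fun hy => ?_) h0) h0
  obtain ⟨b, hb⟩ := polyEval_expand Λ hΛ a
  simp only [hb, parseval]
  set w : (Fin d → ℕ) → ℝ := fun μ => ∏ j, (2 * (μ j : ℝ) + 1) with hw
  have hwpos : ∀ μ ∈ Λ, 0 < w μ := fun μ _ => Finset.prod_pos fun j _ => by positivity
  have hne : Λ.Nonempty := Finset.card_pos.1 (by omega)
  have hWpos : 0 < ∑ μ ∈ Λ, w μ := Finset.sum_pos hwpos hne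
  have hW : ∑ μ ∈ Λ, w μ ≤ (m:ℝ) ^ 2 := by
    rw [← hcard]
    simp only [hw]
    exact_mod_cast sum_prod_le Λ hΛ
  have h1 : ‖∑ μ ∈ Λ, mleg μ y • b μ‖ ≤ ∑ μ ∈ Λ, ‖b μ‖ := by
    refine (norm_sum_le _ _).trans (Finset.sum_le_sum fun μ _ => ?_)
    rw [norm_smul, Real.norm_eq_abs]
    exact mul_le_of_le_one_left (norm_nonneg _) (mleg_bound μ y hy)
  have h2 := Finset.sq_sum_div_le_sum_sq_div Λ (fun μ => ‖b μ‖) hwpos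
  rw [div_le_iff₀ hWpos] at h2
  have hS : 0 ≤ ∑ μ ∈ Λ, ‖b μ‖ ^ 2 / w μ :=
    Finset.sum_nonneg fun μ hμ => div_nonneg (sq_nonneg _) (hwpos μ hμ).le
  refine h1.trans (abs_le_of_sq_le_sq' ?_ (by positivity)).2
  rw [mul_pow, Real.sq_sqrt hS]
  nlinarith [mul_le_mul_of_nonneg_left hW hS]
end

section
/- Let V be a real Hilbert space, r > 1, and let v : Y → V belong to the class A^r with ‖v‖_{A^r} ≤ M0 and ‖v‖_{L^∞(Y,V)} := sup_{y∈Y} ‖v(y)‖ = M > 0, where Y = [−1,1]^d. Let m ≥ 1 be an integer such that 4·M0·m^{−r+1} < M, and let N ≥ 1. Then the set of N-tuples (y_1,…,y_N) ∈ Y^N with max_{1≤i≤N} ‖v(y_i)‖ ≥ M/(8m) has ρ^{⊗N}-measure at least 1 − (1 − 3/(4m²))^N, where ρ is the uniform probability measure on Y. -/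
open MeasureTheory

lemma prod_fact (n : ℕ) : ∏ j ∈ Finset.range n, ((j : ℝ) + 1) = (n.factorial : ℝ) := by
  rw [← Finset.prod_range_add_one_eq_factorial]; push_cast; rfl

lemma prod_fact2 (n : ℕ) : ∏ j ∈ Finset.range n, ((j : ℝ) + 2) = ((n+1).factorial : ℝ) := by
  rw [← prod_fact, Finset.prod_range_succ']
  simp only [Nat.cast_add, Nat.cast_one, Nat.cast_zero, zero_add, mul_one]
  refine Finset.prod_congr rfl fun j _ => by ring

lemma prod_neg_range (n : ℕ) (f : ℕ → ℝ) :
    ∏ j ∈ Finset.range n, (- f j) = (-1) ^ n * ∏ j ∈ Finset.range n, f j := by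
  rw [Finset.prod_neg]; simp

/-- coefficients of the reproducing kernel of polynomials of degree at most `n` on `[0,1]` at `0` -/
lemma exists_kernel (n : ℕ) : ∃ a : ℕ → ℝ, a 0 = ((n : ℝ) + 1) ^ 2 ∧
    (∑ i ∈ Finset.range (n+1), a i * ((i : ℝ) + 1)⁻¹ = 1) ∧
    ∀ j ∈ Finset.range n,
      ∑ i ∈ Finset.range (n+1), a i * ((i : ℝ) + (j + 1 : ℕ) + 1)⁻¹ = 0 := by
  classical
  set Q : Polynomial ℝ := Polynomial.C (((n : ℝ) + 1) * (-1) ^ n) *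
    ∏ j ∈ Finset.range n, (Polynomial.X - Polynomial.C ((j : ℝ) + 1)) with hQ
  set v : ℕ → ℝ := fun i => -((i : ℝ) + 1) with hv
  have hQe : ∀ x : ℝ, Q.eval x =
      ((n : ℝ) + 1) * (-1) ^ n * ∏ j ∈ Finset.range n, (x - (j + 1)) := by
    intro x
    simp [hQ, Polynomial.eval_prod]
  have hinj : Set.InjOn v (Finset.range (n+1) : Set ℕ) := by
    intro x _ y _ hxy
    simpa [hv] using hxy
  have hdeg : Q.degree < (Finset.range (n+1)).card := by
    rw [Finset.card_range]
    refine lt_of_le_of_lt (Polynomial.degree_mul_le _ _) ?_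
    refine lt_of_le_of_lt (add_le_add Polynomial.degree_C_le
      (Polynomial.degree_prod_le _ _)) ?_
    simp only [Polynomial.degree_X_sub_C, Finset.sum_const, Finset.card_range, zero_add]
    rw [nsmul_eq_mul, mul_one]
    exact_mod_cast Nat.lt_succ_self n
  have hint := Lagrange.eq_interpolate (v := v) hinj hdeg
  have hsum : ∀ j : ℕ, Q.eval (j : ℝ) = (∏ i ∈ Finset.range (n+1), ((i : ℝ) + j + 1)) *
      ∑ i ∈ Finset.range (n+1), (Lagrange.nodalWeight (Finset.range (n+1)) v i * Q.eval (v i)) *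
        ((i : ℝ) + j + 1)⁻¹ := by
    intro j
    have hne : ∀ i ∈ Finset.range (n+1), (j : ℝ) ≠ v i := by
      intro i _ h
      have : (0 : ℝ) ≤ j := Nat.cast_nonneg _
      have : (0 : ℝ) ≤ i := Nat.cast_nonneg _
      simp only [hv] at h
      linarith
    conv_lhs => rw [hint]
    rw [Lagrange.eval_interpolate_not_at_node _ hne, Lagrange.eval_nodal]
    congr 1
    · refine Finset.prod_congr rfl fun i _ => by simp only [hv]; ring
    · refine Finset.sum_congr rfl fun i _ => ?_
      have : (j : ℝ) - v i = i + j + 1 := by simp only [hv]; ring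
      rw [this]; ring
  have hfac : ∀ k : ℕ, (k.factorial : ℝ) ≠ 0 := fun k => by exact_mod_cast k.factorial_ne_zero
  have hsq : ((-1 : ℝ) ^ n) * (-1) ^ n = 1 := by rw [← mul_pow]; simp
  refine ⟨fun i => Lagrange.nodalWeight (Finset.range (n+1)) v i * Q.eval (v i), ?_, ?_, ?_⟩
  · have h1 : Lagrange.nodalWeight (Finset.range (n+1)) v 0 = ((n.factorial : ℝ))⁻¹ := by
      rw [Lagrange.nodalWeight, ← prod_fact, ← Finset.prod_inv_distrib]
      have : (Finset.range (n+1)).erase 0 = (Finset.range n).image Nat.succ := by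
        ext x; cases x <;> simp
      rw [this, Finset.prod_image (fun x _ y _ h => Nat.succ_injective h)]
      refine Finset.prod_congr rfl fun i _ => ?_
      simp only [hv]; push_cast; congr 1; ring
    have h2 : Q.eval (v 0) = (n + 1) * ((n+1).factorial : ℝ) := by
      rw [hQe]
      have : ∏ j ∈ Finset.range n, (v 0 - ((j : ℝ) + 1)) =
          ∏ j ∈ Finset.range n, (-((j : ℝ) + 2)) :=
        Finset.prod_congr rfl fun i _ => by simp only [hv]; push_cast; ring
      rw [this, prod_neg_range, prod_fact2]
      linear_combination (n + 1) * ((n+1).factorial : ℝ) * hsq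
    simp only [h1, h2, Nat.factorial_succ]
    push_cast
    field_simp [hfac n]
  · have h := hsum 0
    rw [hQe] at h
    simp only [Nat.cast_zero, add_zero, zero_sub] at h
    rw [prod_neg_range, prod_fact, prod_fact, Nat.factorial_succ] at h
    have h3 : (((n + 1) * n.factorial : ℕ) : ℝ) ≠ 0 := by
      rw [← Nat.factorial_succ]; exact hfac _
    apply mul_left_cancel₀ h3
    rw [← h]
    push_cast
    linear_combination (n + 1) * ((n).factorial : ℝ) * hsq
  · intro j hj
    have h := hsum (j+1)
    rw [hQe] at h
    have h0 : ∏ i ∈ Finset.range n, (((j + 1 : ℕ) : ℝ) - (i + 1)) = 0 :=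
      Finset.prod_eq_zero hj (by push_cast; ring)
    rw [h0, mul_zero] at h
    rcases mul_eq_zero.mp h.symm with h1 | h1
    · exfalso
      rw [Finset.prod_eq_zero_iff] at h1
      obtain ⟨i, _, hi⟩ := h1
      have : (0 : ℝ) < (i : ℝ) + (j + 1 : ℕ) + 1 := by positivity
      linarith
    · exact h1

lemma intpoly (p : Polynomial ℝ) (a b : ℝ) :
    IntervalIntegrable (fun x => p.eval x) volume a b :=
  p.continuous.intervalIntegrable a b

/-- endpoint inequality on `[0,1]` -/
lemma endpoint_ineq (n : ℕ) (p : Polynomial ℝ) (hp : p.natDegree ≤ n) :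
    p.eval 0 ^ 2 ≤ ((n : ℝ) + 1) ^ 2 * ∫ x in (0:ℝ)..1, p.eval x ^ 2 := by
  obtain ⟨a, ha0, h1, h2⟩ := exists_kernel n
  set K : Polynomial ℝ := ∑ i ∈ Finset.range (n+1), Polynomial.C (a i) * Polynomial.X ^ i with hK
  have hKe : ∀ x, K.eval x = ∑ i ∈ Finset.range (n+1), a i * x ^ i := by
    intro x; simp [hK, Polynomial.eval_finset_sum]
  have hKdeg : K.natDegree ≤ n := by
    rw [hK]
    refine Polynomial.natDegree_sum_le_of_forall_le _ _ fun i hi => ?_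
    refine (Polynomial.natDegree_C_mul_X_pow_le _ _).trans ?_
    have := Finset.mem_range.mp hi
    omega
  have hrep : ∀ q : Polynomial ℝ, q.natDegree ≤ n →
      ∫ x in (0:ℝ)..1, K.eval x * q.eval x = q.eval 0 := by
    intro q hq
    have e1 : ∀ x, K.eval x * q.eval x = ∑ j ∈ Finset.range (n+1),
        ∑ i ∈ Finset.range (n+1), q.coeff j * a i * x ^ (i + j) := by
      intro x
      rw [hKe, Polynomial.eval_eq_sum_range' (Nat.lt_succ_of_le hq), mul_comm, Finset.sum_mul_sum]
      refine Finset.sum_congr rfl fun j _ => Finset.sum_congr rfl fun i _ => by ring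
    simp_rw [e1]
    rw [intervalIntegral.integral_finset_sum
      (fun j _ => (by fun_prop : Continuous _).intervalIntegrable _ _)]
    have e2 : ∀ j ∈ Finset.range (n+1), ∫ x in (0:ℝ)..1,
        ∑ i ∈ Finset.range (n+1), q.coeff j * a i * x ^ (i + j) =
        q.coeff j * ∑ i ∈ Finset.range (n+1), a i * ((i : ℝ) + j + 1)⁻¹ := by
      intro j _
      rw [intervalIntegral.integral_finset_sum
        (fun j _ => (by fun_prop : Continuous _).intervalIntegrable _ _), Finset.mul_sum]
      refine Finset.sum_congr rfl fun i _ => ?_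
      rw [intervalIntegral.integral_const_mul, integral_pow]
      push_cast
      simp
      ring
    rw [Finset.sum_congr rfl e2, Finset.sum_range_succ', Finset.sum_eq_zero]
    · simp only [Nat.cast_zero, add_zero, h1, mul_one, zero_add]
      exact Polynomial.coeff_zero_eq_eval_zero q
    · intro j hj
      rw [h2 j hj, mul_zero]
  have hKK : ∫ x in (0:ℝ)..1, K.eval x * K.eval x = ((n : ℝ) + 1) ^ 2 := by
    rw [hrep K hKdeg, hKe, Finset.sum_range_succ']
    simp [ha0]
  have hKp := hrep p hp
  set c : ℝ := ((n : ℝ) + 1) ^ 2 with hc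
  have hcpos : 0 < c := by positivity
  have hnn : 0 ≤ ∫ x in (0:ℝ)..1, (p.eval 0 * K.eval x - c * p.eval x) ^ 2 :=
    intervalIntegral.integral_nonneg (by norm_num) fun x _ => sq_nonneg _
  have hex : ∀ x, (p.eval 0 * K.eval x - c * p.eval x) ^ 2 =
      p.eval 0 ^ 2 * (K.eval x * K.eval x) - 2 * p.eval 0 * c * (K.eval x * p.eval x)
        + c ^ 2 * (p.eval x ^ 2) := fun x => by ring
  simp_rw [hex] at hnn
  have ik : Continuous fun x => K.eval x := K.continuous
  have ip : Continuous fun x => p.eval x := p.continuous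
  rw [intervalIntegral.integral_add, intervalIntegral.integral_sub,
    intervalIntegral.integral_const_mul, intervalIntegral.integral_const_mul,
    intervalIntegral.integral_const_mul, hKK, hKp] at hnn
  · have : 0 ≤ c * (c * (∫ x in (0:ℝ)..1, p.eval x ^ 2) - p.eval 0 ^ 2) := by
      linear_combination hnn
    have := nonneg_of_mul_nonneg_right this hcpos
    linarith
  all_goals exact (by fun_prop : Continuous _).intervalIntegrable _ _

lemma oneD_ineq (n : ℕ) (p : Polynomial ℝ) (hp : p.natDegree ≤ n) (x : ℝ)
    (hx : x ∈ Set.Icc (-1 : ℝ) 1) :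
    p.eval x ^ 2 ≤ ((n : ℝ) + 1) ^ 2 * (2⁻¹ * ∫ t in (-1:ℝ)..1, p.eval t ^ 2) := by
  have key : ∀ c : ℝ, p.eval x ^ 2 ≤
      ((n : ℝ) + 1) ^ 2 * ∫ t in (0:ℝ)..1, p.eval (x + c * t) ^ 2 := by
    intro c
    have h := endpoint_ineq n (p.comp (Polynomial.C x + Polynomial.C c * Polynomial.X)) (by
      refine Polynomial.natDegree_comp_le.trans ?_
      have : (Polynomial.C x + Polynomial.C c * Polynomial.X).natDegree ≤ 1 := by
        compute_degree
      nlinarith)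
    simpa using h
  have hs : ∀ c : ℝ, c * (∫ t in (0:ℝ)..1, p.eval (x + c * t) ^ 2) =
      ∫ t in x..(x + c), p.eval t ^ 2 := by
    intro c
    have := intervalIntegral.smul_integral_comp_add_mul (a := 0) (b := 1)
      (fun t => p.eval t ^ 2) c x
    simpa using this
  have k1 := mul_le_mul_of_nonneg_left (key (1 - x)) (by linarith [hx.2] : 0 ≤ 1 - x)
  have k2 := mul_le_mul_of_nonneg_left (key (-1 - x)) (by linarith [hx.1] : 0 ≤ -(-1 - x))
  have s1 := hs (1 - x)
  have s2 := hs (-1 - x)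
  rw [show x + (1 - x) = 1 by ring] at s1
  rw [show x + (-1 - x) = -1 by ring, intervalIntegral.integral_symm (-1) x] at s2
  have ip : Continuous fun x => p.eval x := p.continuous
  have ii : ∀ a b : ℝ, IntervalIntegrable (fun t => p.eval t ^ 2) volume a b := fun a b =>
    (by fun_prop : Continuous _).intervalIntegrable _ _
  rw [← intervalIntegral.integral_add_adjacent_intervals (ii (-1) x) (ii x 1), ← s1]
  linear_combination (k1 + k2) / 2 - ((n : ℝ) + 1) ^ 2 / 2 * s2

/-- inner product on real polynomials -/
noncomputable def legInner (p q : Polynomial ℝ) : ℝ :=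
  2⁻¹ * ∫ t in (-1:ℝ)..1, p.eval t * q.eval t

lemma legInner_self (p : Polynomial ℝ) (n : ℕ) (hp : p.natDegree ≤ n) (x : ℝ)
    (hx : x ∈ Set.Icc (-1 : ℝ) 1) : p.eval x ^ 2 ≤ ((n : ℝ) + 1) ^ 2 * legInner p p := by
  have := oneD_ineq n p hp x hx
  simpa [legInner, sq] using this

noncomputable def legCore : InnerProductSpace.Core ℝ (Polynomial ℝ) where
  inner := legInner
  conj_inner_symm p q := by simp [legInner, mul_comm]
  re_inner_nonneg p := by
    simp only [legInner, RCLike.re_to_real]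
    refine mul_nonneg (by norm_num) (intervalIntegral.integral_nonneg (by norm_num) ?_)
    intro t _; exact mul_self_nonneg _
  add_left p q s := by
    simp only [legInner, Polynomial.eval_add, add_mul]
    rw [intervalIntegral.integral_add, mul_add]
    all_goals exact ((Polynomial.continuous _).mul (Polynomial.continuous _)).intervalIntegrable _ _
  smul_left p q c := by
    simp only [legInner, Polynomial.eval_smul, smul_eq_mul, mul_assoc]
    rw [intervalIntegral.integral_const_mul]
    simp; ring
  definite p hp := by
    change legInner p p = 0 at hp
    refine Polynomial.eq_zero_of_infinite_isRoot p
      ((Set.Icc_infinite (by norm_num : (-1:ℝ) < 1)).mono fun x hx => ?_)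
    have := legInner_self p _ le_rfl x hx
    rw [hp, mul_zero] at this
    exact pow_eq_zero_iff (two_ne_zero) |>.mp (le_antisymm this (sq_nonneg _))

lemma exists_orthonormal : ∃ l : ℕ → Polynomial ℝ,
    (∀ i j, legInner (l i) (l j) = if i = j then 1 else 0) ∧
    (∀ n, (l n).natDegree ≤ n) ∧
    (∀ n, ∃ b : ℕ → ℝ, Polynomial.X ^ n = ∑ k ∈ Finset.range (n+1), b k • l k) := by
  classical
  letI : NormedAddCommGroup (Polynomial ℝ) := legCore.toNormedAddCommGroup
  letI : InnerProductSpace ℝ (Polynomial ℝ) := InnerProductSpace.ofCore legCore.toCore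
  set f : ℕ → Polynomial ℝ := fun n => Polynomial.X ^ n with hf
  have hli : LinearIndependent ℝ f := by
    have := (Polynomial.basisMonomials ℝ).linearIndependent
    convert this using 1
    ext1 n
    simp [hf, Polynomial.X_pow_eq_monomial]
  have hspan : ∀ n, Submodule.span ℝ (InnerProductSpace.gramSchmidtNormed ℝ f '' Set.Iic n) =
      Submodule.span ℝ (f '' Set.Iic n) := fun n => by
    rw [InnerProductSpace.span_gramSchmidtNormed, InnerProductSpace.span_gramSchmidt_Iic]
  refine ⟨InnerProductSpace.gramSchmidtNormed ℝ f, ?_, ?_, ?_⟩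
  · intro i j
    have := (orthonormal_iff_ite.mp (InnerProductSpace.gramSchmidtNormed_orthonormal hli)) i j
    exact this
  · intro n
    have h : InnerProductSpace.gramSchmidtNormed ℝ f n ∈ Submodule.span ℝ (f '' Set.Iic n) := by
      rw [← hspan]
      exact Submodule.subset_span ⟨n, Set.mem_Iic.mpr le_rfl, rfl⟩
    have hle : Submodule.span ℝ (f '' Set.Iic n) ≤ Polynomial.degreeLE ℝ n := by
      rw [Submodule.span_le]
      rintro _ ⟨k, hk, rfl⟩
      simp only [hf, SetLike.mem_coe, Polynomial.mem_degreeLE]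
      refine (Polynomial.degree_X_pow_le k).trans ?_
      exact_mod_cast hk
    have := hle h
    rw [Polynomial.mem_degreeLE] at this
    exact Polynomial.natDegree_le_iff_degree_le.mpr this
  · intro n
    have h : f n ∈ Submodule.span ℝ
        (InnerProductSpace.gramSchmidtNormed ℝ f '' ((Finset.range (n+1) : Finset ℕ) : Set ℕ)) := by
      have : ((Finset.range (n+1) : Finset ℕ) : Set ℕ) = Set.Iic n := by
        ext x; simp [Nat.lt_succ_iff]
      rw [this, hspan]
      exact Submodule.subset_span ⟨n, Set.mem_Iic.mpr le_rfl, rfl⟩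
    rw [Submodule.mem_span_image_finset_iff_exists_fun] at h
    obtain ⟨c, hc⟩ := h
    refine ⟨fun k => if hk : k ∈ Finset.range (n+1) then c ⟨k, hk⟩ else 0, ?_⟩
    rw [← Finset.sum_coe_sort]
    change f n = _
    rw [← hc]
    refine Finset.sum_congr rfl fun i _ => ?_
    have := i.2
    simp only [dif_pos this]

lemma sum_sq_bound {l : ℕ → Polynomial ℝ}
    (ho : ∀ i j, legInner (l i) (l j) = if i = j then 1 else 0)
    (hdeg : ∀ n, (l n).natDegree ≤ n) (n : ℕ) (x : ℝ) (hx : x ∈ Set.Icc (-1 : ℝ) 1) :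
    ∑ k ∈ Finset.range n, (l k).eval x ^ 2 ≤ (n : ℝ) ^ 2 := by
  rcases n with _ | n
  · simp
  set S := ∑ k ∈ Finset.range (n+1), (l k).eval x ^ 2 with hS
  set p : Polynomial ℝ := ∑ k ∈ Finset.range (n+1), Polynomial.C ((l k).eval x) * l k with hp
  have hpd : p.natDegree ≤ n := by
    refine Polynomial.natDegree_sum_le_of_forall_le _ _ fun k hk => ?_
    refine (Polynomial.natDegree_C_mul_le _ _).trans ((hdeg k).trans ?_)
    have := Finset.mem_range.mp hk
    omega
  have hpe : ∀ t, p.eval t = ∑ k ∈ Finset.range (n+1), (l k).eval x * (l k).eval t := fun t => by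
    simp [hp, Polynomial.eval_finset_sum]
  have hpx : p.eval x = S := by
    rw [hpe]; exact Finset.sum_congr rfl fun k _ => by ring
  have hpp : legInner p p = S := by
    have e : ∀ t, p.eval t * p.eval t = ∑ i ∈ Finset.range (n+1), ∑ j ∈ Finset.range (n+1),
        ((l i).eval x * (l j).eval x) * ((l i).eval t * (l j).eval t) := by
      intro t
      rw [hpe, Finset.sum_mul_sum]
      exact Finset.sum_congr rfl fun i _ => Finset.sum_congr rfl fun j _ => by ring
    have hc : ∀ i, Continuous fun t => (l i).eval t := fun i => (l i).continuous
    rw [legInner]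
    simp_rw [e]
    rw [intervalIntegral.integral_finset_sum
      (fun j _ => (by fun_prop : Continuous _).intervalIntegrable _ _), Finset.mul_sum]
    refine Finset.sum_congr rfl fun i hi => ?_
    rw [intervalIntegral.integral_finset_sum
      (fun j _ => (by fun_prop : Continuous _).intervalIntegrable _ _), Finset.mul_sum]
    simp_rw [intervalIntegral.integral_const_mul]
    have : ∀ j, (2:ℝ)⁻¹ * ((l i).eval x * (l j).eval x *
        ∫ t in (-1:ℝ)..1, (l i).eval t * (l j).eval t) =
        if i = j then (l i).eval x * (l j).eval x else 0 := by
      intro j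
      have := ho i j
      rw [legInner] at this
      rw [mul_left_comm, this]; simp
    simp_rw [this]
    rw [Finset.sum_ite_eq, if_pos hi, sq]
  have h := legInner_self p n hpd x hx
  rw [hpx, hpp] at h
  push_cast
  have hS0 : 0 ≤ S := Finset.sum_nonneg fun k _ => sq_nonneg _
  rcases hS0.eq_or_lt with h0 | h0
  · rw [← h0]; positivity
  · rw [sq S] at h
    exact le_of_mul_le_mul_right h h0

lemma abel_bound (w : ℕ → ℝ) (hw : ∀ n, ∑ k ∈ Finset.range n, w k ≤ (n : ℝ) ^ 2)
    (m : ℕ → ℝ) (hm0 : ∀ k, 0 ≤ m k) (hm : Antitone m) (B : ℕ) :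
    ∑ k ∈ Finset.range B, w k * m k ^ 2 ≤ (∑ k ∈ Finset.range B, m k) ^ 2 := by
  have hT : ∀ B : ℕ, (B : ℝ) * m B ≤ ∑ k ∈ Finset.range B, m k := by
    intro B
    have := Finset.card_nsmul_le_sum (Finset.range B) m (m B)
      (fun k hk => hm (Finset.mem_range.mp hk).le)
    simpa using this
  have key : ∀ B : ℕ, ∑ k ∈ Finset.range B, w k * m k ^ 2 +
      ((B : ℝ) ^ 2 - ∑ k ∈ Finset.range B, w k) * m B ^ 2 ≤ (∑ k ∈ Finset.range B, m k) ^ 2 := by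
    intro B
    induction B with
    | zero => simp
    | succ B ih =>
      have h1 := hw (B + 1)
      rw [Finset.sum_range_succ] at h1 ⊢
      rw [Finset.sum_range_succ, Finset.sum_range_succ]
      have h2 : m (B+1) ^ 2 ≤ m B ^ 2 := pow_le_pow_left₀ (hm0 _) (hm (Nat.le_succ B)) 2
      have h3 := mul_le_mul_of_nonneg_left h2 (sub_nonneg.mpr h1)
      have h4 := mul_le_mul_of_nonneg_right (hT B) (hm0 B)
      push_cast at h3 ⊢
      linarith
  have h1 := key B
  have h2 := mul_nonneg (sub_nonneg.mpr (hw B)) (sq_nonneg (m B))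
  linarith

lemma lower_bound_sum : ∀ (d : ℕ) (w : Fin d → ℕ → ℝ) (_ : ∀ j k, 0 ≤ w j k)
    (_ : ∀ j n, ∑ k ∈ Finset.range n, w j k ≤ (n : ℝ) ^ 2)
    (Λ : Finset (Fin d → ℕ)) (_ : DownwardClosed Λ),
    ∑ ν ∈ Λ, ∏ j, w j (ν j) ≤ (Λ.card : ℝ) ^ 2 := by
  classical
  intro d
  induction d with
  | zero =>
    intro w _ _ Λ _
    simp only [Finset.univ_eq_empty, Finset.prod_empty, Finset.sum_const, nsmul_eq_mul, mul_one]
    have : Λ.card ≤ Λ.card ^ 2 := Nat.le_self_pow two_ne_zero _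
    exact_mod_cast this
  | succ d ih =>
    intro w hw0 hw Λ hΛ
    set S : ℕ → Finset (Fin d → ℕ) := fun k => (Λ.filter fun ν => ν 0 = k).image Fin.tail with hS
    have memS : ∀ k μ, μ ∈ S k ↔ (Fin.cons k μ : Fin (d+1) → ℕ) ∈ Λ := by
      intro k μ
      simp only [hS, Finset.mem_image, Finset.mem_filter]
      constructor
      · rintro ⟨ν, ⟨hν, rfl⟩, rfl⟩
        rwa [Fin.cons_self_tail]
      · intro h
        exact ⟨_, ⟨h, rfl⟩, Fin.tail_cons _ _⟩
    have hinj : ∀ k, Set.InjOn (Fin.tail : (Fin (d+1) → ℕ) → (Fin d → ℕ))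
        ((Λ.filter fun ν => ν 0 = k : Finset _) : Set (Fin (d+1) → ℕ)) := by
      intro k ν hν ν' hν' h
      simp only [Finset.coe_filter, Set.mem_setOf_eq] at hν hν'
      rw [← Fin.cons_self_tail ν, ← Fin.cons_self_tail ν', hν.2, hν'.2, h]
    have hSd : ∀ k, DownwardClosed (S k) := by
      intro k ν hν μ hμ
      rw [memS] at hν ⊢
      refine hΛ _ hν _ ?_
      intro j
      refine Fin.cases ?_ (fun j => ?_) j
      · simp
      · simpa using hμ j
    have hSanti : Antitone fun k => ((S k).card : ℝ) := by
      intro k k' hk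
      have : S k' ⊆ S k := by
        intro μ hμ
        rw [memS] at hμ ⊢
        refine hΛ _ hμ _ ?_
        intro j
        refine Fin.cases ?_ (fun j => ?_) j
        · simpa using hk
        · simp
      exact Nat.cast_le.mpr (Finset.card_le_card this)
    set B := Λ.sup (fun ν => ν 0) + 1 with hB
    have hmaps : ∀ ν ∈ Λ, ν 0 ∈ Finset.range B := by
      intro ν hν
      rw [Finset.mem_range, hB, Nat.lt_succ_iff]
      exact Finset.le_sup (f := fun ν : Fin (d+1) → ℕ => ν 0) hν
    have hcard : (Λ.card : ℝ) = ∑ k ∈ Finset.range B, ((S k).card : ℝ) := by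
      rw [Finset.card_eq_sum_card_fiberwise hmaps]
      push_cast
      refine Finset.sum_congr rfl fun k _ => ?_
      rw [hS, Finset.card_image_of_injOn (hinj k)]
    rw [← Finset.sum_fiberwise_of_maps_to hmaps, hcard]
    refine le_trans ?_ (abel_bound (w 0) (hw 0) _ (fun k => Nat.cast_nonneg _) hSanti B)
    refine Finset.sum_le_sum fun k _ => ?_
    have h1 := ih (fun j => w j.succ) (fun j k => hw0 _ _) (fun j n => hw _ n) (S k) (hSd k)
    refine le_trans (le_of_eq ?_) (mul_le_mul_of_nonneg_left h1 (hw0 0 k))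
    rw [hS, Finset.sum_image (hinj k), Finset.mul_sum]
    refine Finset.sum_congr rfl fun ν hν => ?_
    rw [Fin.prod_univ_succ, (Finset.mem_filter.mp hν).2]
    rfl

instance uniform1_prob : IsProbabilityMeasure
    ((2 : ENNReal)⁻¹ • (volume.restrict (Set.Icc (-1 : ℝ) 1))) := by
  constructor
  simp only [Measure.smul_apply, Measure.restrict_apply_univ, Real.volume_Icc, smul_eq_mul]
  norm_num
  exact ENNReal.inv_mul_cancel (by norm_num) (by norm_num)

instance uniformCube_prob (d : ℕ) : IsProbabilityMeasure (uniformCube d) := by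
  unfold uniformCube; infer_instance

lemma cube_compact (d : ℕ) : IsCompact (cube d) :=
  isCompact_univ_pi fun _ => isCompact_Icc

lemma uniformCube_cube (d : ℕ) : uniformCube d (cube d) = 1 := by
  unfold uniformCube cube
  rw [Measure.pi_pi]
  refine Finset.prod_eq_one fun i _ => ?_
  simp only [Measure.smul_apply, smul_eq_mul, Measure.restrict_apply_self, Real.volume_Icc]
  norm_num
  exact ENNReal.inv_mul_cancel (by norm_num) (by norm_num)

lemma ae_cube (d : ℕ) : ∀ᵐ y ∂(uniformCube d), y ∈ cube d := by
  refine (mem_ae_iff_prob_eq_one (cube_compact d).measurableSet).mpr ?_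
  exact uniformCube_cube d

lemma integrable_of_cont {d : ℕ} (f : (Fin d → ℝ) → ℝ) (hf : Continuous f) :
    Integrable f (uniformCube d) := by
  obtain ⟨C, hC⟩ := (cube_compact d).exists_bound_of_continuousOn hf.continuousOn
  exact Integrable.of_bound hf.aestronglyMeasurable C ((ae_cube d).mono fun y hy => hC y hy)

lemma integral_uniform1 (p q : Polynomial ℝ) :
    ∫ x, p.eval x * q.eval x ∂((2 : ENNReal)⁻¹ • (volume.restrict (Set.Icc (-1 : ℝ) 1))) =
      legInner p q := by
  rw [integral_smul_measure, legInner, intervalIntegral.integral_of_le (by norm_num),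
    integral_Icc_eq_integral_Ioc]
  simp

lemma scalar_ineq {d : ℕ} (Λ : Finset (Fin d → ℕ)) (hΛ : DownwardClosed Λ)
    (a : (Fin d → ℕ) → ℝ) (y₀ : Fin d → ℝ) (hy₀ : y₀ ∈ cube d) :
    (polyEval Λ a y₀) ^ 2 ≤ (Λ.card : ℝ) ^ 2 * ∫ y, (polyEval Λ a y) ^ 2 ∂(uniformCube d) := by
  classical
  obtain ⟨l, ho, hdeg, hb⟩ := exists_orthonormal
  choose b hb using hb
  set L : (Fin d → ℕ) → (Fin d → ℝ) → ℝ := fun ν y => ∏ j, (l (ν j)).eval (y j) with hL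
  have hLc : ∀ ν, Continuous (L ν) := fun ν =>
    continuous_finset_prod _ fun j _ => (l (ν j)).continuous.comp (continuous_apply j)
  have hmem : polyEval Λ a ∈ Submodule.span ℝ (L '' (Λ : Set (Fin d → ℕ))) := by
    have e : polyEval Λ a = ∑ ν ∈ Λ, a ν • ∑ μ ∈ Fintype.piFinset
        (fun j => Finset.range (ν j + 1)), (∏ j, b (ν j) (μ j)) • L μ := by
      ext y
      simp only [polyEval, Finset.sum_apply, Pi.smul_apply, smul_eq_mul]
      refine Finset.sum_congr rfl fun ν _ => ?_
      rw [mul_comm]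
      congr 1
      have : ∀ j, y j ^ ν j = ∑ k ∈ Finset.range (ν j + 1), b (ν j) k * (l k).eval (y j) := by
        intro j
        have := congrArg (Polynomial.eval (y j)) (hb (ν j))
        simpa [Polynomial.eval_finset_sum] using this
      simp_rw [this]
      rw [Finset.prod_univ_sum]
      refine Finset.sum_congr rfl fun μ _ => ?_
      rw [Finset.prod_mul_distrib]
    rw [e]
    refine Submodule.sum_mem _ fun ν hν => Submodule.smul_mem _ _ <|
      Submodule.sum_mem _ fun μ hμ => Submodule.smul_mem _ _ <|
      Submodule.subset_span ⟨μ, hΛ ν hν μ ?_, rfl⟩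
    intro j
    have := Fintype.mem_piFinset.mp hμ j
    exact Nat.lt_succ_iff.mp (Finset.mem_range.mp this)
  rw [Submodule.mem_span_image_finset_iff_exists_fun] at hmem
  obtain ⟨c, hc⟩ := hmem
  have hpe : ∀ y, polyEval Λ a y = ∑ ν : Λ, c ν * L ν y := by
    intro y; rw [← hc]; simp
  have hint : ∀ ν μ, ∫ y, L ν y * L μ y ∂(uniformCube d) = if ν = μ then 1 else 0 := by
    intro ν μ
    simp only [hL, ← Finset.prod_mul_distrib]
    unfold uniformCube
    rw [integral_fintype_prod_eq_prod (fun j x => (l (ν j)).eval x * (l (μ j)).eval x)]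
    simp_rw [integral_uniform1, ho]
    split_ifs with h
    · subst h; simp
    · obtain ⟨j, hj⟩ := Function.ne_iff.mp h
      exact Finset.prod_eq_zero (Finset.mem_univ j) (if_neg hj)
  have hI : ∫ y, (polyEval Λ a y) ^ 2 ∂(uniformCube d) = ∑ ν : Λ, c ν ^ 2 := by
    have e : ∀ y, polyEval Λ a y ^ 2 = ∑ ν : Λ, ∑ μ : Λ, (c ν * c μ) * (L ν y * L μ y) := by
      intro y
      rw [hpe, sq, Finset.sum_mul_sum]
      exact Finset.sum_congr rfl fun i _ => Finset.sum_congr rfl fun j _ => by ring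
    simp_rw [e]
    rw [integral_finset_sum _ (fun ν _ => integrable_of_cont _ (by fun_prop))]
    refine Finset.sum_congr rfl fun ν _ => ?_
    rw [integral_finset_sum _ (fun ν _ => integrable_of_cont _ (by fun_prop))]
    simp_rw [integral_const_mul, hint]
    simp only [mul_ite, mul_one, mul_zero, SetLike.coe_eq_coe]
    rw [Finset.sum_ite_eq, if_pos (Finset.mem_univ _), sq]
  have hLb : ∑ ν : Λ, L ν y₀ ^ 2 ≤ (Λ.card : ℝ) ^ 2 := by
    have := lower_bound_sum d (fun j k => (l k).eval (y₀ j) ^ 2) (fun j k => sq_nonneg _)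
      (fun j n => sum_sq_bound ho hdeg n (y₀ j) (hy₀ j (Set.mem_univ j))) Λ hΛ
    refine le_trans (le_of_eq ?_) this
    rw [Finset.sum_coe_sort Λ (fun ν => L ν y₀ ^ 2)]
    refine Finset.sum_congr rfl fun ν _ => ?_
    simp only [hL, Finset.prod_pow]
  rw [hI, hpe]
  refine (Finset.sum_mul_sq_le_sq_mul_sq _ _ _).trans ?_
  rw [mul_comm]
  exact mul_le_mul_of_nonneg_right hLb (Finset.sum_nonneg fun _ _ => sq_nonneg _)

lemma polyEval_continuous {d : ℕ} {V : Type*} [NormedAddCommGroup V] [InnerProductSpace ℝ V]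
    (Λ : Finset (Fin d → ℕ)) (a : (Fin d → ℕ) → V) : Continuous (polyEval Λ a) := by
  unfold polyEval; fun_prop

lemma vector_ineq {d : ℕ} {V : Type*} [NormedAddCommGroup V] [InnerProductSpace ℝ V]
    (Λ : Finset (Fin d → ℕ)) (hΛ : DownwardClosed Λ)
    (a : (Fin d → ℕ) → V) (y₀ : Fin d → ℝ) (hy₀ : y₀ ∈ cube d) :
    ‖polyEval Λ a y₀‖ ^ 2 ≤
      (Λ.card : ℝ) ^ 2 * ∫ y, ‖polyEval Λ a y‖ ^ 2 ∂(uniformCube d) := by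
  set w := polyEval Λ a y₀ with hw
  have hs : ∀ y, polyEval Λ (fun ν => inner ℝ w (a ν)) y = inner ℝ w (polyEval Λ a y) := by
    intro y
    simp [polyEval, inner_sum, inner_smul_right]
  have h := scalar_ineq Λ hΛ (fun ν => inner ℝ w (a ν)) y₀ hy₀
  simp_rw [hs] at h
  rw [← hw, real_inner_self_eq_norm_sq] at h
  have hc := polyEval_continuous Λ a
  have h2 : ∫ y, (inner ℝ w (polyEval Λ a y)) ^ 2 ∂(uniformCube d) ≤
      ‖w‖ ^ 2 * ∫ y, ‖polyEval Λ a y‖ ^ 2 ∂(uniformCube d) := by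
    rw [← integral_const_mul]
    refine integral_mono (integrable_of_cont _ (by fun_prop)) (integrable_of_cont _ (by fun_prop)) ?_
    intro y
    have := abs_real_inner_le_norm w (polyEval Λ a y)
    have := pow_le_pow_left₀ (abs_nonneg _) this 2
    rw [sq_abs, mul_pow] at this
    exact this
  rcases (norm_nonneg w).eq_or_lt with h0 | h0
  · rw [← h0]
    have : 0 ≤ ∫ y, ‖polyEval Λ a y‖ ^ 2 ∂(uniformCube d) :=
      integral_nonneg fun y => by positivity
    simp only [ne_eq, OfNat.ofNat_ne_zero, not_false_eq_true, zero_pow]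
    positivity
  · have h3 : ‖w‖ ^ 2 * ‖w‖ ^ 2 ≤ ‖w‖ ^ 2 *
        ((Λ.card : ℝ) ^ 2 * ∫ y, ‖polyEval Λ a y‖ ^ 2 ∂(uniformCube d)) := by
      have := mul_le_mul_of_nonneg_left h2 (sq_nonneg (Λ.card : ℝ))
      linarith
    exact le_of_mul_le_mul_left h3 (by positivity)

lemma measure_bound {d : ℕ} {V : Type*} [NormedAddCommGroup V] [InnerProductSpace ℝ V]
    (Λ : Finset (Fin d → ℕ)) (hΛ : DownwardClosed Λ) (hm : 1 ≤ Λ.card)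
    (a : (Fin d → ℕ) → V) (B : ℝ) (hB : 0 < B)
    (y₀ : Fin d → ℝ) (hy₀ : y₀ ∈ cube d) (hy₀B : ‖polyEval Λ a y₀‖ = B)
    (hmax : ∀ y ∈ cube d, ‖polyEval Λ a y‖ ≤ B) :
    3 / (4 * (Λ.card : ℝ) ^ 2) ≤
      (uniformCube d).real {y | y ∈ cube d ∧ B / (2 * Λ.card) ≤ ‖polyEval Λ a y‖} := by
  set m : ℝ := (Λ.card : ℝ) with hmdef
  have hm1 : (1 : ℝ) ≤ m := Nat.one_le_cast.mpr hm
  set E : Set (Fin d → ℝ) := {y | y ∈ cube d ∧ B / (2 * m) ≤ ‖polyEval Λ a y‖} with hE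
  have hc := polyEval_continuous Λ a
  have hEm : MeasurableSet E := by
    have : IsClosed E := (cube_compact d).isClosed.inter (isClosed_le continuous_const hc.norm)
    exact this.measurableSet
  have h := vector_ineq Λ hΛ a y₀ hy₀
  rw [hy₀B, ← hmdef] at h
  have h2 : ∫ y, ‖polyEval Λ a y‖ ^ 2 ∂(uniformCube d) ≤
      ∫ y, (E.indicator (fun _ => B ^ 2 - (B / (2 * m)) ^ 2) y + (B / (2 * m)) ^ 2)
        ∂(uniformCube d) := by
    refine integral_mono_ae (integrable_of_cont _ (by fun_prop))
      (((integrable_const _).indicator hEm).add (integrable_const _)) ?_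
    filter_upwards [ae_cube d] with y hy
    by_cases hyE : y ∈ E
    · simp only [Set.indicator_of_mem hyE, sub_add_cancel]
      exact pow_le_pow_left₀ (norm_nonneg _) (hmax y hy) 2
    · simp only [Set.indicator_of_notMem hyE, zero_add]
      refine pow_le_pow_left₀ (norm_nonneg _) ?_ 2
      by_contra hcon
      exact hyE ⟨hy, (not_le.mp hcon).le⟩
  rw [integral_add ((integrable_const _).indicator hEm) (integrable_const _),
    integral_indicator_const _ hEm, integral_const, probReal_univ] at h2
  set e := (uniformCube d).real E with he
  have he0 : 0 ≤ e := measureReal_nonneg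
  simp only [smul_eq_mul, one_mul] at h2
  have h3 := h.trans (mul_le_mul_of_nonneg_left h2 (sq_nonneg m))
  have h4 : m ^ 2 * (e * (B ^ 2 - (B / (2 * m)) ^ 2) + (B / (2 * m)) ^ 2) =
      B ^ 2 * (e * (m ^ 2 - 1/4) + 1/4) := by
    field_simp
    ring
  rw [h4] at h3
  have h5 : 1 ≤ e * (m ^ 2 - 1/4) + 1/4 := by
    have hB2 : 0 < B ^ 2 := by positivity
    by_contra hcon
    nlinarith
  rw [div_le_iff₀ (by positivity)]
  nlinarith

lemma exists_lower {d : ℕ} (hd : 0 < d) (m : ℕ) :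
    ∃ Λ : Finset (Fin d → ℕ), DownwardClosed Λ ∧ Λ.card = m := by
  classical
  refine ⟨(Finset.range m).image fun k => Pi.single (⟨0, hd⟩ : Fin d) k, ?_, ?_⟩
  · intro ν hν μ hμ
    rw [Finset.mem_image] at hν ⊢
    obtain ⟨k, hk, rfl⟩ := hν
    refine ⟨μ ⟨0, hd⟩, ?_, ?_⟩
    · have := hμ ⟨0, hd⟩
      simp only [Pi.single_eq_same] at this
      rw [Finset.mem_range] at hk ⊢
      omega
    · ext j
      by_cases hj : j = ⟨0, hd⟩
      · subst hj; simp
      · have := hμ j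
        rw [Pi.single_eq_of_ne hj] at this ⊢
        exact (Nat.le_zero.mp this).symm
  · rw [Finset.card_image_of_injective _ (Pi.single_injective _), Finset.card_range]

/-- the double supremum over the cube, when bounded -/
lemma le_biSup_cube {d : ℕ} (f : (Fin d → ℝ) → ℝ) (hf : ∀ y, 0 ≤ f y) (C : ℝ)
    (hC : ∀ y ∈ cube d, f y ≤ C) (y : Fin d → ℝ) (hy : y ∈ cube d) :
    f y ≤ ⨆ y ∈ cube d, f y := by
  have hC0 : 0 ≤ C := (hf y).trans (hC y hy)
  have hb : BddAbove (Set.range fun y => ⨆ (_ : y ∈ cube d), f y) := by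
    refine ⟨C, ?_⟩
    rintro _ ⟨z, rfl⟩
    exact Real.iSup_le (fun hz => hC z hz) hC0
  refine le_trans ?_ (le_ciSup hb y)
  simp [hy]

lemma bdd_of_biSup_pos {d : ℕ} (f : (Fin d → ℝ) → ℝ) (hf : ∀ y, 0 ≤ f y)
    (h : 0 < ⨆ y ∈ cube d, f y) : ∀ y ∈ cube d, f y ≤ ⨆ y ∈ cube d, f y := by
  by_cases hb : BddAbove (Set.range fun y => ⨆ (_ : y ∈ cube d), f y)
  · intro y hy
    refine le_trans ?_ (le_ciSup hb y)
    simp [hy]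
  · rw [Real.iSup_of_not_bddAbove hb] at h
    exact absurd h (lt_irrefl _)

theorem statement10 {d : ℕ} (hd : 0 < d) {V : Type*} [NormedAddCommGroup V]
    [InnerProductSpace ℝ V]
    (r : ℝ) (hr : 1 < r) (v : (Fin d → ℝ) → V) (hv : MemA r v)
    (M0 : ℝ) (hM0 : normA r v ≤ M0)
    (M : ℝ) (hM : M = ⨆ y ∈ cube d, ‖v y‖) (hMpos : 0 < M)
    (m : ℕ) (hm : 1 ≤ m) (hcond : 4 * M0 * (m : ℝ) ^ (-r + 1) < M)
    (N : ℕ) (hN : 1 ≤ N) :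
    ENNReal.ofReal (1 - (1 - 3 / (4 * (m : ℝ) ^ 2)) ^ N) ≤
      (Measure.pi fun _ : Fin N => uniformCube d)
        {ys : Fin N → Fin d → ℝ | (∀ i, ys i ∈ cube d) ∧ ∃ i, M / (8 * m) ≤ ‖v (ys i)‖} := by
  have hm1 : (1 : ℝ) ≤ m := by exact_mod_cast hm
  have hm0 : (0 : ℝ) < m := by linarith
  have hvM : ∀ y ∈ cube d, ‖v y‖ ≤ M := by
    rw [hM]
    exact bdd_of_biSup_pos (fun y => ‖v y‖) (fun y => norm_nonneg _) (hM ▸ hMpos)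
  -- bound on the approximation error
  have hmr : (0 : ℝ) < (m : ℝ) ^ (-r) := Real.rpow_pos_of_pos hm0 _
  have hsemi : deltaApprox v m ≤ M0 * (m : ℝ) ^ (-r) := by
    have hs : semiA r v ≤ M0 := (le_max_right _ _).trans hM0
    refine le_trans ?_ (mul_le_mul_of_nonneg_right hs hmr.le)
    rw [← div_le_iff₀ hmr]
    obtain ⟨C, hC⟩ := hv
    refine le_csInf ⟨C, hC⟩ ?_
    rintro C' ⟨_, hC'⟩
    rw [div_le_iff₀ hmr]
    exact hC' m hm
  have hlt : deltaApprox v m < M / (4 * m) := by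
    refine lt_of_le_of_lt hsemi ?_
    rw [lt_div_iff₀ (by positivity)]
    rw [Real.rpow_add hm0, Real.rpow_one] at hcond
    linarith
  obtain ⟨e, ⟨Λ, a, hΛ, hcard, rfl⟩, he⟩ := exists_lt_of_csInf_lt (by
    obtain ⟨Λ, h1, h2⟩ := exists_lower hd m
    exact ⟨_, Λ, 0, h1, h2, rfl⟩) hlt
  have hc := polyEval_continuous Λ a
  have h0mem : (0 : Fin d → ℝ) ∈ cube d := fun j _ => by
    constructor <;> simp
  obtain ⟨y₀, hy₀, hmax⟩ := (cube_compact d).exists_isMaxOn ⟨0, h0mem⟩ hc.norm.continuousOn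
  set B := ‖polyEval Λ a y₀‖ with hB
  have hmax' : ∀ y ∈ cube d, ‖polyEval Λ a y‖ ≤ B := fun y hy => hmax hy
  have herr : ∀ y ∈ cube d, ‖v y - polyEval Λ a y‖ ≤ M / (4 * m) := by
    intro y hy
    refine le_trans ?_ he.le
    exact le_biSup_cube (fun y => ‖v y - polyEval Λ a y‖) (fun y => norm_nonneg _) (M + B)
      (fun z hz => (norm_sub_le _ _).trans (add_le_add (hvM z hz) (hmax' z hz))) y hy
  have hBM : M ≤ B + M / (4 * m) := by
    rw [hM]
    have hnn : 0 ≤ B + M / (4 * m) := by positivity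
    rw [← hM]
    refine hM.le.trans (Real.iSup_le (fun y => Real.iSup_le (fun hy => ?_) hnn) hnn)
    have h1 := herr y hy
    have h2 := hmax' y hy
    have h3 := norm_sub_norm_le (v y) (polyEval Λ a y)
    linarith
  have hq : M / (4 * m) ≤ M / 4 :=
    div_le_div_of_nonneg_left hMpos.le (by norm_num) (by linarith)
  have hBpos : 0 < B := by linarith
  set E : Set (Fin d → ℝ) := {y | y ∈ cube d ∧ B / (2 * m) ≤ ‖polyEval Λ a y‖} with hE
  have hEm : MeasurableSet E := by
    have : IsClosed E := (cube_compact d).isClosed.inter (isClosed_le continuous_const hc.norm)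
    exact this.measurableSet
  have hEmeas : 3 / (4 * (m : ℝ) ^ 2) ≤ (uniformCube d).real E := by
    have := measure_bound Λ hΛ (hcard ▸ hm) a B hBpos y₀ hy₀ rfl hmax'
    rw [hcard] at this
    exact this
  have hEv : ∀ y ∈ E, M / (8 * m) ≤ ‖v y‖ := by
    rintro y ⟨hy, hyB⟩
    have h1 := herr y hy
    have h3 := norm_sub_norm_le (polyEval Λ a y) (v y)
    rw [norm_sub_rev] at h3
    have h4 : 3 * M / 4 / (2 * m) ≤ B / (2 * m) :=
      div_le_div_of_nonneg_right (by linarith) (by positivity)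
    have h5 : 3 * M / 4 / (2 * m) = M / (4 * m) + M / (8 * m) := by field_simp; ring
    linarith
  set μ := (Measure.pi fun _ : Fin N => uniformCube d) with hμ
  set T : Set (Fin N → Fin d → ℝ) :=
    {ys | (∀ i, ys i ∈ cube d) ∧ ∃ i, M / (8 * m) ≤ ‖v (ys i)‖} with hT
  have hcov : (Set.univ : Set (Fin N → Fin d → ℝ)) ⊆
      (T ∪ (Set.univ.pi fun _ => cube d)ᶜ) ∪ Set.univ.pi fun _ => Eᶜ := by
    intro ys _
    by_cases h1 : ys ∈ Set.univ.pi fun _ : Fin N => cube d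
    · by_cases h2 : ys ∈ Set.univ.pi fun _ : Fin N => Eᶜ
      · exact Or.inr h2
      · simp only [Set.mem_univ_pi, Set.mem_compl_iff, not_forall, not_not] at h2
        obtain ⟨i, hi⟩ := h2
        exact Or.inl (Or.inl ⟨fun i => h1 i (Set.mem_univ i), i, hEv _ hi⟩)
    · exact Or.inl (Or.inr h1)
  have hC0 : μ (Set.univ.pi fun _ => cube d)ᶜ = 0 := by
    rw [prob_compl_eq_zero_iff (MeasurableSet.univ_pi fun _ => (cube_compact d).measurableSet),
      hμ, Measure.pi_pi]
    simp [uniformCube_cube]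
  have hEc : μ (Set.univ.pi fun _ => Eᶜ) =
      ENNReal.ofReal ((1 - (uniformCube d).real E) ^ N) := by
    rw [hμ, Measure.pi_pi, Finset.prod_const, Finset.card_univ, Fintype.card_fin,
      ENNReal.ofReal_pow (by linarith [measureReal_le_one (μ := uniformCube d) (s := E)]),
      ← probReal_compl_eq_one_sub hEm, ofReal_measureReal]
  have hle1 : (1 - (uniformCube d).real E) ^ N ≤ (1 - 3 / (4 * (m : ℝ) ^ 2)) ^ N :=
    pow_le_pow_left₀ (by linarith [measureReal_le_one (μ := uniformCube d) (s := E)])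
      (by linarith) N
  have hfin : 1 ≤ μ T + ENNReal.ofReal ((1 - 3 / (4 * (m : ℝ) ^ 2)) ^ N) := by
    calc (1 : ENNReal) = μ Set.univ := measure_univ.symm
      _ ≤ μ T + μ (Set.univ.pi fun _ => cube d)ᶜ + μ (Set.univ.pi fun _ => Eᶜ) :=
        (measure_mono hcov).trans ((measure_union_le _ _).trans
          (add_le_add_left (measure_union_le _ _) _))
      _ ≤ _ := by
        rw [hC0, add_zero, hEc]
        exact add_le_add_right (ENNReal.ofReal_le_ofReal hle1) _
  rw [ENNReal.ofReal_sub _ (le_trans (pow_nonneg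
    (by linarith [measureReal_le_one (μ := uniformCube d) (s := E)]) N) hle1), ENNReal.ofReal_one]
  exact tsub_le_iff_right.mpr hfin
end
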